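/- Let d ≥ 3 and P = -div(G(x)∇) with G real symmetric, entries in C_b^∞(ℝ^d), satisfying Λ₊ ≥ G(x) ≥ Λ₋ > 0. Then for all χ ∈ C₀^∞(ℝ^d), all φ ∈ C₀^∞(ℝ), and all j = 1, …, d, the operator χ(x) R(j) φ(P) is compact on L²(ℝ^d), where R(j) = ∂_{x_j} P^{-1/2} is the j-th component of the Riesz transform. -/

import Mathlib

open MeasureTheory Filter Topology Complex
open scoped Real ENNReal FourierTransform ComplexConjugate

noncomputable section

/-- Euclidean space `ℝ^d`. -/
abbrev Ed (d : ℕ) : Type := EuclideanSpace ℝ (Fin d)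

/-- `L²(ℝ^d)` with complex values. -/
abbrev L2 (d : ℕ) := MeasureTheory.Lp ℂ 2 (volume : Measure (Ed d))

/-- The partial derivative `∂_j u`. -/
def pd (d : ℕ) (j : Fin d) (u : Ed d → ℂ) : Ed d → ℂ :=
  fun x => fderiv ℝ u x (EuclideanSpace.single j (1:ℝ))

/-- The operator `∑_{j,k} D_j (b_{jk} D_k) = - ∑_{j,k} ∂_j (b_{jk} ∂_k)` (complex
coefficients), applied to a function `u`. -/
def divGradC (d : ℕ) (b : Ed d → Fin d → Fin d → ℂ) (u : Ed d → ℂ) : Ed d → ℂ :=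
  fun x => -∑ j : Fin d, ∑ k : Fin d,
    fderiv ℝ (fun y => b y j k * fderiv ℝ u y (EuclideanSpace.single k (1:ℝ))) x
      (EuclideanSpace.single j (1:ℝ))

/-- `- div (G ∇ u) = ∑_{j,k} D_j (G_{jk} D_k) u` for a real coefficient matrix `G`. -/
def divGrad (d : ℕ) (G : Ed d → Fin d → Fin d → ℝ) (u : Ed d → ℂ) : Ed d → ℂ :=
  divGradC d (fun x j k => (G x j k : ℂ)) u

/-- The operation `a ↦ x·∇a` on real valued functions. -/
def xdotOp (d : ℕ) : (Ed d → ℝ) → Ed d → ℝ := fun a x => fderiv ℝ a x x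

/-- The operation `a ↦ x·∇a` on complex valued functions. -/
def xdotC (d : ℕ) : (Ed d → ℂ) → Ed d → ℂ := fun a x => fderiv ℝ a x x

/-- `a ∈ C_b^∞(ℝ^d)`: smooth with all derivatives bounded. -/
def CbSmooth (d : ℕ) (a : Ed d → ℝ) : Prop :=
  ContDiff ℝ (⊤ : ℕ∞) a ∧ ∀ n : ℕ, ∃ C : ℝ, ∀ x, ‖iteratedFDeriv ℝ n a x‖ ≤ C

/-- `a ∈ S_dil(ℝ^d)` : `a ∈ C_b^∞` and `(x·∇)^n a ∈ L^∞` for all `n`. -/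
def MemSdil (d : ℕ) (a : Ed d → ℝ) : Prop :=
  CbSmooth d a ∧ ∀ n : ℕ, ∃ C : ℝ, ∀ x, |(xdotOp d)^[n] a x| ≤ C

/-- Complex-valued version of `S_dil(ℝ^d)`. -/
def MemSdilC (d : ℕ) (a : Ed d → ℂ) : Prop :=
  (ContDiff ℝ (⊤ : ℕ∞) a ∧ ∀ n : ℕ, ∃ C : ℝ, ∀ x, ‖iteratedFDeriv ℝ n a x‖ ≤ C) ∧
  ∀ n : ℕ, ∃ C : ℝ, ∀ x, ‖(xdotC d)^[n] a x‖ ≤ C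

/-- The coefficient matrix is symmetric with real entries. -/
def SymmetricCoef (d : ℕ) (G : Ed d → Fin d → Fin d → ℝ) : Prop := ∀ x j k, G x j k = G x k j

/-- Uniform ellipticity: `Λ₊ ≥ G(x) ≥ Λ₋ > 0` as quadratic forms. -/
def UniformlyElliptic (d : ℕ) (G : Ed d → Fin d → Fin d → ℝ) : Prop :=
  ∃ lam Lam : ℝ, 0 < lam ∧ ∀ (x : Ed d) (v : Fin d → ℝ),
    lam * ∑ j, v j ^ 2 ≤ (∑ j, ∑ k, G x j k * v j * v k) ∧
      (∑ j, ∑ k, G x j k * v j * v k) ≤ Lam * ∑ j, v j ^ 2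

/-- The standing assumptions of the paper: `G` symmetric with entries in `C_b^∞`,
uniformly elliptic. -/
def Standing (d : ℕ) (G : Ed d → Fin d → Fin d → ℝ) : Prop :=
  (∀ j k, CbSmooth d fun x => G x j k) ∧ SymmetricCoef d G ∧ UniformlyElliptic d G

/-- `G = I_d + H`. -/
def Gmat (d : ℕ) (H : Ed d → Fin d → Fin d → ℝ) : Ed d → Fin d → Fin d → ℝ :=
  fun x j k => (if j = k then 1 else 0) + H x j k

/-- Long range condition `|∂^α (G - I_d)| ≤ C_α ⟨x⟩^{-μ-|α|}`. -/
def LongRange (d : ℕ) (G : Ed d → Fin d → Fin d → ℝ) (μ : ℝ) : Prop :=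
  ∀ (j k : Fin d) (n : ℕ), ∃ C : ℝ, ∀ x : Ed d,
    ‖iteratedFDeriv ℝ n (fun y => G y j k - if j = k then (1:ℝ) else 0) x‖
      ≤ C * ((1 + ‖x‖ ^ 2) ^ (-(μ + n) / 2) : ℝ)

/-- `R` is the resolvent `(P - z)⁻¹` of the self-adjoint realization of
`P = - div (G ∇·)`: for every `f ∈ L²`, `g = R f` solves `(P - z) g = f` in the sense
of distributions (this characterizes the resolvent uniquely). -/
def IsWeakResolvent (d : ℕ) (G : Ed d → Fin d → Fin d → ℝ) (z : ℂ)
    (R : L2 d →L[ℂ] L2 d) : Prop :=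
  ∀ (f : L2 d) (φ : SchwartzMap (Ed d) ℂ),
    (∫ x, (R f) x * divGrad d G (⇑φ) x) - z * (∫ x, (R f) x * φ x) = ∫ x, f x * φ x

/-- The japanese bracket weight `⟨x⟩^s = (1+|x|²)^{s/2}`. -/
def jweight (d : ℕ) (s : ℝ) : Ed d → ℝ := fun x => (1 + ‖x‖ ^ 2) ^ (s / 2)

/-- The dilation group `(e^{itA} u)(x) = e^{td/2} u(e^t x)`, where
`A = (x·∇ + ∇·x)/(2i)` is the generator of dilations. -/
def dil (d : ℕ) (t : ℝ) (u : Ed d → ℂ) : Ed d → ℂ :=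
  fun x => (Real.exp (t * d / 2) : ℂ) * u (Real.exp t • x)

/-- The `L²` inner product of two functions (conjugate linear in the first variable,
as is Mathlib's convention). -/
def pairL2 (d : ℕ) (u v : Ed d → ℂ) : ℂ := ∫ x : Ed d, (starRingEnd ℂ) (u x) * v x

/-- The resolvent `(hA - z)⁻¹ = (1/i) ∫₀^{±∞} e^{-itz} e^{ithA} dt` (`± Im z < 0`) of the
(rescaled) generator of dilations, realized by its defining integral formula. -/
def resDil (d : ℕ) (h : ℝ) (z : ℂ) (u : Ed d → ℂ) : Ed d → ℂ := fun x =>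
  if z.im < 0 then
    Complex.I⁻¹ * ∫ t in Set.Ici (0:ℝ), Complex.exp (-(Complex.I * t * z)) * dil d (t * h) u x
  else
    -Complex.I⁻¹ * ∫ t in Set.Iic (0:ℝ), Complex.exp (-(Complex.I * t * z)) * dil d (t * h) u x

/-- `sin(τ A) u = (e^{iτA} - e^{-iτA}) u / (2i)`. -/
def sinA (d : ℕ) (τ : ℝ) (u : Ed d → ℂ) : Ed d → ℂ :=
  fun x => (dil d τ u x - dil d (-τ) u x) / (2 * Complex.I)

/-- `F(hA) = arctan(hA)` realized through `arctan λ = ∫₀^∞ sin(tλ) e^{-t} dt / t`. -/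
def arctanA (d : ℕ) (h : ℝ) (u : Ed d → ℂ) : Ed d → ℂ :=
  fun x => ∫ t in Set.Ioi (0:ℝ), ((Real.exp (-t) / t : ℝ) : ℂ) * sinA d (t * h) u x

/-- Coefficients of the commutator `i[P,A] = ∑ D_j (2G_{jk} - x·∇G_{jk}) D_k`. -/
def commCoef (d : ℕ) (G : Ed d → Fin d → Fin d → ℝ) : Ed d → Fin d → Fin d → ℝ :=
  fun x j k => 2 * G x j k - xdotOp d (fun y => G y j k) x

/-- `P_τ = e^{-iτA} (i[P,A]) e^{iτA}` applied to a function. -/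
def ptauFun (d : ℕ) (G : Ed d → Fin d → Fin d → ℝ) (τ : ℝ) (u : Ed d → ℂ) : Ed d → ℂ :=
  dil d (-τ) (divGrad d (commCoef d G) (dil d τ u))

/-- Coefficients of `P_τ = e^{-iτA} (i[P,A]) e^{iτA}` for `P = -div((I+H)∇)`;
indeed `e^{-iτA} (∑ D_j b D_k) e^{iτA} = e^{2τ} ∑ D_j b(e^{-τ}x) D_k`. -/
def ptauCoef (d : ℕ) (H : Ed d → Fin d → Fin d → ℝ) (τ : ℝ) : Ed d → Fin d → Fin d → ℝ :=
  fun x j k => Real.exp (2 * τ) * commCoef d (Gmat d H) (Real.exp (-τ) • x) j k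

/-- Coefficients of `Q_s = ∫₀¹ (d P_τ / dτ)|_{τ=σs} dσ`. -/
def qCoef (d : ℕ) (H : Ed d → Fin d → Fin d → ℝ) (s : ℝ) : Ed d → Fin d → Fin d → ℝ :=
  fun x j k => ∫ σ in (0:ℝ)..(1:ℝ), deriv (fun τ => ptauCoef d H τ x j k) (σ * s)

/-- Coefficients of `B_τ = τ ∫₀¹ s Q_{sτ} ds`. -/
def bCoef (d : ℕ) (H : Ed d → Fin d → Fin d → ℝ) (τ : ℝ) : Ed d → Fin d → Fin d → ℝ :=
  fun x j k => τ * ∫ s in (0:ℝ)..(1:ℝ), s * qCoef d H (s * τ) x j k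

/-- The Fourier multiplier `|D|` (with symbol `|ξ|`). -/
def absD (d : ℕ) (u : Ed d → ℂ) : Ed d → ℂ :=
  fun x => 𝓕⁻ (fun ξ : Ed d => (‖ξ‖ : ℂ) * 𝓕 u ξ) x

/-- `‖ |D| w ‖_{L²}`, computed on the Fourier side (Plancherel). -/
def Dnorm (d : ℕ) (w : Ed d → ℂ) : ℝ :=
  (eLpNorm (fun ξ : Ed d => (‖ξ‖ : ℂ) * 𝓕 w ξ) 2 volume).toReal

/-- A general Fourier multiplier `ρ(D)`. -/
def multD (d : ℕ) (ρ : Ed d → ℂ) (u : Ed d → ℂ) : Ed d → ℂ :=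
  fun x => 𝓕⁻ (fun ξ : Ed d => ρ ξ * 𝓕 u ξ) x

/-- The operator `A = (x·∇ + ∇·x)/(2i) = (x·∇ + d/2)/i` applied to a function. -/
def opA (d : ℕ) (u : Ed d → ℂ) : Ed d → ℂ :=
  fun x => (fderiv ℝ u x x + (d / 2 : ℂ) * u x) / Complex.I

/-- The functions `F_ν(λ) = ∫₀^∞ sin(tλ) t/(t²+ν²) e^{-t} dt` approximating `arctan`. -/
def Fnu (ν lam : ℝ) : ℝ :=
  ∫ t in Set.Ioi (0:ℝ), Real.sin (t * lam) * (t / (t ^ 2 + ν ^ 2)) * Real.exp (-t)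

/-- `m`-admissible family in `S_dil(ℝ^d)`:
`‖∂_τ^k (x·∇)^n b_τ‖_{L^∞} ≤ C_{kn} e^{m|τ|}` for all `k, n`. -/
def AdmissibleCoeff (d : ℕ) (m : ℕ) (b : ℝ → Ed d → ℂ) : Prop :=
  (∀ τ, MemSdilC d (b τ)) ∧
  (∀ (n : ℕ) (x : Ed d), ContDiff ℝ (⊤ : ℕ∞) fun τ => (xdotC d)^[n] (b τ) x) ∧
  ∀ k n : ℕ, ∃ C : ℝ, ∀ (τ : ℝ) (x : Ed d),
    ‖iteratedDeriv k (fun σ => (xdotC d)^[n] (b σ) x) τ‖ ≤ C * Real.exp (m * |τ|)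

/-- `m`-admissible family of differential operators `B_τ = ∑ D_j b_{jk,τ} D_k`. -/
def AdmissibleOp (d : ℕ) (m : ℕ) (B : ℝ → Ed d → Fin d → Fin d → ℂ) : Prop :=
  ∀ j k, AdmissibleCoeff d m fun τ x => B τ x j k

/-- Functions that are continuous and bounded on `[0,∞)` (the spectrum of `P`). -/
def GoodSymbol (φ : ℝ → ℂ) : Prop :=
  Continuous φ ∧ ∃ C : ℝ, ∀ lam : ℝ, 0 ≤ lam → ‖φ lam‖ ≤ C

/-- The (continuous bounded) functional calculus `φ ↦ φ(P)` of the nonnegative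
self-adjoint operator `P = -div(G∇)`, characterized by: it is linear and
multiplicative on continuous functions bounded on `[0,∞) ⊇ spec(P)`, compatible with
sup-norm bounds and adjoints, only depends on the restriction of the symbol to
`[0,∞)`, and sends `λ ↦ (λ - z)⁻¹` to the resolvent `(P - z)⁻¹`.  These properties
determine `φ(P)` uniquely for every `φ` continuous and vanishing at infinity.
Moreover `0` is not an eigenvalue of `P` (field `ker_triv`). -/
structure SpectralCalc (d : ℕ) (G : Ed d → Fin d → Fin d → ℝ) where
  map : (ℝ → ℂ) → (L2 d →L[ℂ] L2 d)
  map_congr : ∀ φ ψ, GoodSymbol φ → GoodSymbol ψ →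
    (∀ lam : ℝ, 0 ≤ lam → φ lam = ψ lam) → map φ = map ψ
  map_add : ∀ φ ψ, GoodSymbol φ → GoodSymbol ψ →
    map (fun lam => φ lam + ψ lam) = map φ + map ψ
  map_smul : ∀ (c : ℂ) φ, GoodSymbol φ → map (fun lam => c * φ lam) = c • map φ
  map_mul : ∀ φ ψ, GoodSymbol φ → GoodSymbol ψ →
    map (fun lam => φ lam * ψ lam) = (map φ).comp (map ψ)
  map_norm : ∀ (φ) (C : ℝ), (∀ lam : ℝ, 0 ≤ lam → ‖φ lam‖ ≤ C) → ‖map φ‖ ≤ C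
  map_star : ∀ φ, GoodSymbol φ →
    ContinuousLinearMap.adjoint (map φ) = map (fun lam => (starRingEnd ℂ) (φ lam))
  map_resolvent : ∀ z : ℂ, z.im ≠ 0 →
    IsWeakResolvent d G z (map fun lam => ((lam : ℂ) - z)⁻¹)
  ker_triv : ∀ f : L2 d,
    (∀ φ : SchwartzMap (Ed d) ℂ, (∫ x, f x * divGrad d G (⇑φ) x) = 0) → f = 0

/-- `Rj = ∂_j P^{-1/2}` is the `j`-th Riesz transform of `P`, defined as the strong
limit `s-lim_n π^{-1/2} ∂_j ∫_{1/n}^n e^{-tP} dt/√t`; here `gn n` is the vector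
integral `∫_{1/n}^n e^{-tP} f dt/√t` and `wn n` is its distributional `∂_j`
derivative. -/
def RieszOf (d : ℕ) (G : Ed d → Fin d → Fin d → ℝ) (S : SpectralCalc d G) (j : Fin d)
    (Rj : L2 d →L[ℂ] L2 d) : Prop :=
  ∀ (f : L2 d) (gn wn : ℕ → L2 d),
    (∀ n : ℕ, gn n = ∫ t in Set.Icc ((n : ℝ)⁻¹) (n : ℝ),
        ((Real.sqrt t)⁻¹ : ℝ) • (S.map (fun lam => Complex.exp (-(t : ℂ) * ((max lam 0 : ℝ) : ℂ))) f)) →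
    (∀ (n : ℕ) (φ : SchwartzMap (Ed d) ℂ),
        (∫ x, (wn n) x * φ x) = -∫ x, (gn n) x * pd d j (⇑φ) x) →
    Tendsto (fun n : ℕ => ((Real.sqrt Real.pi)⁻¹ : ℝ) • wn n) atTop (𝓝 (Rj f))

/-- Hilbert-Schmidt type operator attached to an `L²` family of functionals. -/
def HSop {d : ℕ} {H : Type*} [NormedAddCommGroup H] [NormedSpace ℂ H]
    (F : Lp (H →L[ℂ] ℂ) 2 (volume : Measure (Ed d))) : H →L[ℂ] L2 d :=
  LinearMap.mkContinuous
    { toFun := fun g => (ContinuousLinearMap.apply ℂ ℂ g).compLp F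
      map_add' := by
        intro g h
        apply Lp.ext
        filter_upwards [(ContinuousLinearMap.apply ℂ ℂ g).coeFn_compLp F,
          (ContinuousLinearMap.apply ℂ ℂ h).coeFn_compLp F,
          (ContinuousLinearMap.apply ℂ ℂ (g+h)).coeFn_compLp F,
          Lp.coeFn_add ((ContinuousLinearMap.apply ℂ ℂ g).compLp F)
            ((ContinuousLinearMap.apply ℂ ℂ h).compLp F)] with x h1 h2 h3 h4
        rw [h4, h3]; simp [h1, h2]
      map_smul' := by
        intro c g
        apply Lp.ext
        filter_upwards [(ContinuousLinearMap.apply ℂ ℂ g).coeFn_compLp F,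
          (ContinuousLinearMap.apply ℂ ℂ (c • g)).coeFn_compLp F,
          Lp.coeFn_smul c ((ContinuousLinearMap.apply ℂ ℂ g).compLp F)] with x h1 h2 h4
        rw [h2, RingHom.id_apply, h4, Pi.smul_apply, h1]
        simp }
    ‖F‖ (by
      intro g
      simp only [LinearMap.coe_mk, AddHom.coe_mk]
      rw [mul_comm]
      apply Lp.norm_le_mul_norm_of_ae_le_mul
      filter_upwards [(ContinuousLinearMap.apply ℂ ℂ g).coeFn_compLp F] with x h1
      rw [h1]
      simpa [mul_comm] using (F x).le_opNorm g)

lemma HSop_apply {d : ℕ} {H : Type*} [NormedAddCommGroup H] [NormedSpace ℂ H]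
    (F : Lp (H →L[ℂ] ℂ) 2 (volume : Measure (Ed d))) (g : H) :
    HSop F g =ᵐ[volume] fun x => F x g := by
  exact (ContinuousLinearMap.apply ℂ ℂ g).coeFn_compLp F

lemma HSop_norm {d : ℕ} {H : Type*} [NormedAddCommGroup H] [NormedSpace ℂ H]
    (F : Lp (H →L[ℂ] ℂ) 2 (volume : Measure (Ed d))) : ‖HSop F‖ ≤ ‖F‖ :=
  LinearMap.mkContinuous_norm_le _ (norm_nonneg _) _

lemma HSop_add {d : ℕ} {H : Type*} [NormedAddCommGroup H] [NormedSpace ℂ H]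
    (F F' : Lp (H →L[ℂ] ℂ) 2 (volume : Measure (Ed d))) : HSop (F + F') = HSop F + HSop F' := by
  ext1 g
  apply Lp.ext
  filter_upwards [HSop_apply F g, HSop_apply F' g, HSop_apply (F+F') g, Lp.coeFn_add F F',
    Lp.coeFn_add (HSop F g) (HSop F' g)] with x h1 h2 h3 h4 h5
  rw [h3, add_apply, h5, h4, Pi.add_apply, Pi.add_apply, h1, h2]
  rfl

lemma HSop_sub {d : ℕ} {H : Type*} [NormedAddCommGroup H] [NormedSpace ℂ H]
    (F F' : Lp (H →L[ℂ] ℂ) 2 (volume : Measure (Ed d))) : HSop (F - F') = HSop F - HSop F' := by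
  rw [eq_sub_iff_add_eq, ← HSop_add, sub_add_cancel]

lemma HSop_continuous {d : ℕ} {H : Type*} [NormedAddCommGroup H] [NormedSpace ℂ H] :
    Continuous (fun F : Lp (H →L[ℂ] ℂ) 2 (volume : Measure (Ed d)) => HSop F) := by
  apply LipschitzWith.continuous (K := 1)
  apply LipschitzWith.of_dist_le_mul
  intro F F'
  rw [dist_eq_norm, dist_eq_norm, ← HSop_sub]
  simpa using HSop_norm (F - F')

theorem HSop_compact {d : ℕ} {H : Type*} [NormedAddCommGroup H] [NormedSpace ℂ H]
    (F : Lp (H →L[ℂ] ℂ) 2 (volume : Measure (Ed d))) : IsCompactOperator (HSop F) := by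
  have h2t : (2 : ℝ≥0∞) ≠ ⊤ := by norm_num
  refine Lp.induction h2t (fun F : Lp (H →L[ℂ] ℂ) 2 (volume : Measure (Ed d)) =>
    IsCompactOperator (HSop F)) ?_ ?_ ?_ F
  · intro c s hs hμ
    have : HSop ((Lp.simpleFunc.indicatorConst 2 hs hμ.ne c :
        Lp.simpleFunc (H →L[ℂ] ℂ) 2 (volume : Measure (Ed d))) :
        Lp (H →L[ℂ] ℂ) 2 (volume : Measure (Ed d)))
        = (ContinuousLinearMap.toSpanSingleton ℂ
            (indicatorConstLp 2 hs hμ.ne (1:ℂ) : L2 d)) ∘L c := by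
      ext1 g
      apply Lp.ext
      rw [Lp.simpleFunc.coe_indicatorConst]
      refine (HSop_apply _ g).trans ?_
      rw [ContinuousLinearMap.comp_apply, ContinuousLinearMap.toSpanSingleton_apply]
      filter_upwards [indicatorConstLp_coeFn (p := 2) (hs := hs) (hμs := hμ.ne) (c := c),
        indicatorConstLp_coeFn (p := 2) (hs := hs) (hμs := hμ.ne) (c := (1:ℂ)),
        Lp.coeFn_smul (c g) (indicatorConstLp 2 hs hμ.ne (1:ℂ) : L2 d)] with x h1 h2 h3
      rw [h1, h3, Pi.smul_apply, h2]
      by_cases hx : x ∈ s <;> simp [hx]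
    rw [this]
    have hid : IsCompactOperator (id : ℂ → ℂ) :=
      isCompactOperator_id_iff_locallyCompactSpace.2 inferInstance
    have hc : IsCompactOperator c := hid.comp_clm c
    exact hc.clm_comp (ContinuousLinearMap.toSpanSingleton ℂ
            (indicatorConstLp 2 hs hμ.ne (1:ℂ) : L2 d))
  · intro f g hf hg hd h1 h2
    rw [HSop_add]; exact h1.add h2
  · exact isClosed_setOfPred_isCompactOperator.preimage HSop_continuous
/-- Complex Schwartz functions on `ℝ^d`. -/
abbrev Sc (d : ℕ) := SchwartzMap (Ed d) ℂ

/-- The basis vector `e_j`. -/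
abbrev eb {d : ℕ} (j : Fin d) : Ed d := EuclideanSpace.single j (1:ℝ)

/-- The partial derivative on Schwartz functions. -/
def dd {d : ℕ} (j : Fin d) : Sc d →L[ℂ] Sc d := LineDeriv.lineDerivOpCLM ℂ (Sc d) (eb j)

/-- Schwartz functions as elements of `L²`. -/
def toL {d : ℕ} : Sc d →L[ℂ] L2 d := SchwartzMap.toLpCLM ℂ ℂ 2 volume

/-- Multiplication by a real function of temperate growth. -/
def mulS {d : ℕ} (a : Ed d → ℝ) : Sc d →L[ℂ] Sc d :=
  SchwartzMap.smulLeftCLM ℂ (fun x => ((a x : ℝ) : ℂ))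

/-- The divergence form operator on Schwartz functions. -/
def opP {d : ℕ} (A : Ed d → Fin d → Fin d → ℝ) (u : Sc d) : Sc d :=
  -∑ j, ∑ k, dd j (mulS (fun x => A x j k) (dd k u))

lemma dd_apply {d : ℕ} (j : Fin d) (u : Sc d) (x : Ed d) : dd j u x = fderiv ℝ u x (eb j) := rfl

lemma dd_eq {d : ℕ} (j : Fin d) (u : Sc d) : dd j u = LineDeriv.lineDerivOp (eb j) u := rfl

lemma toL_ae {d : ℕ} (u : Sc d) : toL u =ᵐ[volume] u := SchwartzMap.coeFn_toLp u 2 volume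

lemma mulS_apply {d : ℕ} {a : Ed d → ℝ} (ha : a.HasTemperateGrowth) (u : Sc d) (x : Ed d) :
    mulS a u x = (a x : ℂ) * u x := by
  have : (fun x => ((a x : ℝ) : ℂ)).HasTemperateGrowth := by fun_prop
  simp [mulS, SchwartzMap.smulLeftCLM_apply_apply this]

lemma dd_comm {d : ℕ} (j k : Fin d) (u : Sc d) : dd j (dd k u) = dd k (dd j u) := by
  simp only [dd_eq]
  have h : ∀ m : Ed d, (fun x : Ed d => inner ℝ x m).HasTemperateGrowth := fun m => by fun_prop
  rw [SchwartzMap.lineDeriv_eq_fourierMultiplierCLM, SchwartzMap.lineDeriv_eq_fourierMultiplierCLM,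
    SchwartzMap.lineDeriv_eq_fourierMultiplierCLM, SchwartzMap.lineDeriv_eq_fourierMultiplierCLM]
  have e : ∀ (g : Ed d → ℝ) (c : ℂ) (v : Sc d), SchwartzMap.fourierMultiplierCLM ℂ g (c • v)
      = c • SchwartzMap.fourierMultiplierCLM ℂ g v := by
    intro g c v
    simp only [SchwartzMap.fourierMultiplierCLM_apply]
    rw [FourierTransform.fourier_smul, ← FourierTransform.fourierInv_smul]
    congr 1
    ext x
    by_cases hg : g.HasTemperateGrowth
    · simp [SchwartzMap.smulLeftCLM_apply_apply hg]; ring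
    · simp [SchwartzMap.smulLeftCLM, hg]
  rw [e, e, SchwartzMap.fourierMultiplierCLM_fourierMultiplierCLM_apply (h _) (h _),
   SchwartzMap.fourierMultiplierCLM_fourierMultiplierCLM_apply (h _) (h _), mul_comm (fun x : Ed d => inner ℝ x (eb j))]

lemma inner_toL {d : ℕ} (u v : Sc d) :
    inner ℂ (toL u) (toL v) = ∫ x, conj (u x) * v x := by
  rw [L2.inner_def]
  apply integral_congr_ae
  filter_upwards [toL_ae u, toL_ae v] with x h1 h2
  rw [h1, h2, RCLike.inner_apply, mul_comm]

lemma ibp {d : ℕ} (j : Fin d) (u v : Sc d) :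
    inner ℂ (toL u) (toL (dd j v)) = - inner ℂ (toL (dd j u)) (toL v) := by
  rw [inner_toL, inner_toL]
  have := SchwartzMap.integral_bilinear_lineDerivOp_right_eq_neg_left (μ := volume) u v
    ((ContinuousLinearMap.mul ℝ ℂ).comp (Complex.conjCLE : ℂ →L[ℝ] ℂ)) (eb j)
  simpa [dd_eq] using this

lemma fderivE_tg {d : ℕ} {a : Ed d → ℝ} (ha : CbSmooth d a) (l : Fin d) :
    (fun x => fderiv ℝ a x (eb l)).HasTemperateGrowth := by
  have h1 : (fderiv ℝ a).HasTemperateGrowth := by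
    refine ⟨?_, fun n => ?_⟩
    · exact ha.1.fderiv_right (m := (⊤ : ℕ∞)) (by simp)
    · obtain ⟨C, hC⟩ := ha.2 (n+1)
      refine ⟨0, C, fun x => ?_⟩
      rw [norm_iteratedFDeriv_fderiv]
      simpa using hC x
  exact ((ContinuousLinearMap.apply ℝ ℝ (eb l)).hasTemperateGrowth).comp h1

lemma CbSmooth.tg {d : ℕ} {a : Ed d → ℝ} (ha : CbSmooth d a) : a.HasTemperateGrowth :=
  ⟨ha.1, fun n => by
    obtain ⟨C, hC⟩ := ha.2 n
    exact ⟨0, C, fun x => by simpa using hC x⟩⟩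

lemma leib {d : ℕ} {a : Ed d → ℝ} (ha : CbSmooth d a) (l : Fin d) (u : Sc d) :
    dd l (mulS a u) = mulS a (dd l u) + mulS (fun x => fderiv ℝ a x (eb l)) u := by
  ext x
  rw [add_apply, mulS_apply ha.tg, mulS_apply (fderivE_tg ha l), dd_apply, dd_apply]
  have h1 : (mulS a u : Ed d → ℂ) = fun x => (a x) • u x := by
    ext x; rw [mulS_apply ha.tg]; simp
  have hd : DifferentiableAt ℝ a x := (ha.1.differentiable (by simp)).differentiableAt
  rw [h1, fderiv_fun_smul hd u.differentiableAt]
  simp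

lemma mulS_bound {d : ℕ} {a : Ed d → ℝ} (ha : a.HasTemperateGrowth) {M : ℝ}
    (hM : ∀ x, |a x| ≤ M) (u : Sc d) : ‖toL (mulS a u)‖ ≤ M * ‖toL u‖ := by
  apply Lp.norm_le_mul_norm_of_ae_le_mul
  filter_upwards [toL_ae u, toL_ae (mulS a u)] with x h1 h2
  rw [h1, h2, mulS_apply ha, norm_mul]
  gcongr
  simpa using hM x

/-- Uniform assumptions for coefficients. -/
structure Coef {d : ℕ} (A : Ed d → Fin d → Fin d → ℝ) (lam M : ℝ) : Prop where
  smooth : ∀ j k, CbSmooth d (fun x => A x j k)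
  bd : ∀ j k x, |A x j k| ≤ M
  bd1 : ∀ j k l x, |fderiv ℝ (fun x => A x j k) x (eb l)| ≤ M
  ell : ∀ (x : Ed d) (v : Fin d → ℝ), lam * ∑ j, v j ^ 2 ≤ ∑ j, ∑ k, A x j k * v j * v k

lemma ell_pt {d : ℕ} {A : Ed d → Fin d → Fin d → ℝ} {lam M : ℝ} (hA : Coef A lam M) (x : Ed d)
    (v : Fin d → ℂ) :
    lam * ∑ j, (inner ℂ (v j) (v j)).re ≤ ∑ j, ∑ k, (inner ℂ (v j) ((A x j k : ℂ) * v k)).re := by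
  have h1 := hA.ell x (fun j => (v j).re)
  have h2 := hA.ell x (fun j => (v j).im)
  have e1 : ∑ j, (inner ℂ (v j) (v j)).re = ∑ j, (v j).re ^ 2 + ∑ j, (v j).im ^ 2 := by
    rw [← Finset.sum_add_distrib]
    refine Finset.sum_congr rfl fun j _ => ?_
    rw [RCLike.inner_apply, Complex.mul_re, Complex.conj_re, Complex.conj_im]; ring
  have e2 : ∑ j, ∑ k, (inner ℂ (v j) ((A x j k : ℂ) * v k)).re =
      ∑ j, ∑ k, A x j k * (v j).re * (v k).re + ∑ j, ∑ k, A x j k * (v j).im * (v k).im := by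
    simp only [← Finset.sum_add_distrib]
    refine Finset.sum_congr rfl fun j _ => Finset.sum_congr rfl fun k _ => ?_
    simp [RCLike.inner_apply]; ring
  rw [e1, e2, mul_add]
  linarith

lemma ell_int {d : ℕ} {A : Ed d → Fin d → Fin d → ℝ} {lam M : ℝ} (hA : Coef A lam M)
    (v : Fin d → Sc d) :
    lam * ∑ j, ‖toL (v j)‖ ^ 2 ≤
      ∑ j, ∑ k, (inner ℂ (toL (v j)) (toL (mulS (fun x => A x j k) (v k)))).re := by
  have e0 : ∀ f g : L2 d, (inner ℂ f g).re = ∫ x, (inner ℂ (f x) (g x)).re := by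
    intro f g
    rw [L2.inner_def]
    exact (integral_re (L2.integrable_inner (𝕜 := ℂ) f g)).symm
  have hi : ∀ f g : L2 d, Integrable (fun x => (inner ℂ (f x) (g x)).re) :=
    fun f g => (L2.integrable_inner (𝕜 := ℂ) f g).re
  have e1 : ∀ f : L2 d, ‖f‖ ^ 2 = (inner ℂ f f).re := fun f =>
    norm_sq_eq_re_inner (𝕜 := ℂ) f
  simp only [e1, e0]
  rw [← integral_finsetSum _ (fun j _ => hi _ _), ← integral_const_mul]
  have e3 : ∀ j, ∑ k, ∫ x, (inner ℂ ((toL (v j)) x) ((toL (mulS (fun x => A x j k) (v k))) x)).re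
      = ∫ x, ∑ k, (inner ℂ ((toL (v j)) x) ((toL (mulS (fun x => A x j k) (v k))) x)).re :=
    fun j => (integral_finsetSum _ (fun k _ => hi _ _)).symm
  simp only [e3]
  rw [← integral_finsetSum _ (fun j _ => integrable_finsetSum _ (fun k _ => hi _ _))]
  apply integral_mono_ae
  · exact (integrable_finsetSum _ (fun k _ => hi _ _)).const_mul _
  · exact integrable_finsetSum _ fun j _ => (integrable_finsetSum _ (fun k _ => hi _ _))
  · have h1 : ∀ᵐ x : Ed d, ∀ j, toL (v j) x = v j x := ae_all_iff.2 fun j => toL_ae _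
    have h2 : ∀ᵐ x : Ed d, ∀ j k, toL (mulS (fun x => A x j k) (v k)) x
        = mulS (fun x => A x j k) (v k) x :=
      ae_all_iff.2 fun j => ae_all_iff.2 fun k => toL_ae _
    filter_upwards [h1, h2] with x h1 h2
    simp only [h1, h2, mulS_apply (hA.smooth _ _).tg]
    exact ell_pt hA x (fun j => v j x)

lemma energy {d : ℕ} {A : Ed d → Fin d → Fin d → ℝ} {lam M : ℝ} (hA : Coef A lam M)
    (u : Sc d) : lam * ∑ j, ‖toL (dd j u)‖ ^ 2 ≤ (inner ℂ (toL u) (toL (opP A u))).re := by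
  refine (ell_int hA (fun j => dd j u)).trans (le_of_eq ?_)
  simp [opP, map_sum, inner_neg_right, inner_sum, ibp]

lemma second {d : ℕ} {A : Ed d → Fin d → Fin d → ℝ} {lam M : ℝ} (hA : Coef A lam M)
    (u : Sc d) (l : Fin d) : lam * ∑ j, ‖toL (dd j (dd l u))‖ ^ 2 ≤
      ‖toL (dd l (dd l u))‖ * ‖toL (opP A u)‖ +
       ∑ j, ∑ k, ‖toL (dd j (dd l u))‖ * (M * ‖toL (dd k u)‖) := by
  have h0 : (inner ℂ (toL (dd l (dd l u))) (toL (opP A u))).re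
     = - ∑ j, ∑ k, (inner ℂ (toL (dd j (dd l u))) (toL (mulS (fun x => A x j k) (dd k (dd l u))))).re
      - ∑ j, ∑ k, (inner ℂ (toL (dd j (dd l u)))
        (toL (mulS (fun x => fderiv ℝ (fun x => A x j k) x (eb l)) (dd k u)))).re := by
    have : ∀ j k, inner ℂ (toL (dd l (dd l u))) (toL (dd j (mulS (fun x => A x j k) (dd k u))))
        = inner ℂ (toL (dd j (dd l u))) (toL (mulS (fun x => A x j k) (dd k (dd l u))))
          + inner ℂ (toL (dd j (dd l u)))
        (toL (mulS (fun x => fderiv ℝ (fun x => A x j k) x (eb l)) (dd k u))) := by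
      intro j k
      rw [← inner_add_right, ← map_add, dd_comm k l, ← leib (hA.smooth j k), ibp, ibp,
        dd_comm j l]
    rw [opP, map_neg, inner_neg_right, map_sum, inner_sum]
    simp only [map_sum, inner_sum, this]
    simp [Finset.sum_add_distrib]
    ring
  have h1 := ell_int hA (fun j => dd j (dd l u))
  have h2 : -(inner ℂ (toL (dd l (dd l u))) (toL (opP A u))).re ≤
      ‖toL (dd l (dd l u))‖ * ‖toL (opP A u)‖ := by
    refine (neg_le_abs _).trans ((Complex.abs_re_le_norm _).trans (norm_inner_le_norm _ _))
  have h3 : -∑ j, ∑ k, (inner ℂ (toL (dd j (dd l u)))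
        (toL (mulS (fun x => fderiv ℝ (fun x => A x j k) x (eb l)) (dd k u)))).re
        ≤ ∑ j, ∑ k, ‖toL (dd j (dd l u))‖ * (M * ‖toL (dd k u)‖) := by
    simp only [← Finset.sum_neg_distrib]
    refine Finset.sum_le_sum fun j _ => Finset.sum_le_sum fun k _ => ?_
    refine (neg_le_abs _).trans ((Complex.abs_re_le_norm _).trans
      ((norm_inner_le_norm _ _).trans ?_))
    gcongr
    exact mulS_bound (fderivE_tg (hA.smooth j k) l) (hA.bd1 j k l) _
  simp only [dd_comm _ l] at *
  linarith

/-- The map `u ↦ (P + 1) u` from Schwartz functions to `L²`. -/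
def LL {d : ℕ} (A : Ed d → Fin d → Fin d → ℝ) : Sc d →L[ℂ] L2 d :=
  toL.comp (ContinuousLinearMap.id ℂ (Sc d) -
    ∑ j, ∑ k, (dd j).comp ((mulS (fun x => A x j k)).comp (dd k)))

lemma LL_apply {d : ℕ} (A : Ed d → Fin d → Fin d → ℝ) (u : Sc d) :
    LL A u = toL (opP A u) + toL u := by
  rw [← map_add]
  simp only [LL, ContinuousLinearMap.comp_apply, opP]
  congr 1
  simp
  abel

lemma opP_divGrad {d : ℕ} {G : Ed d → Fin d → Fin d → ℝ} (hG : ∀ j k, CbSmooth d fun x => G x j k)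
    (u : Sc d) : divGrad d G (⇑u) = ⇑(opP G u) := by
  have h1 : ∀ j k, (fun y => (G y j k : ℂ) * fderiv ℝ u y (EuclideanSpace.single k (1:ℝ)))
      = ⇑(mulS (fun x => G x j k) (dd k u)) := by
    intro j k; ext x; rw [mulS_apply (hG j k).tg, dd_apply]
  ext x
  have h2 : ∀ (s : Finset (Fin d)) (F : Fin d → Sc d), (∑ j ∈ s, F j) x = ∑ j ∈ s, F j x := by
    intro s F
    induction s using Finset.induction_on with
    | empty => simp
    | insert a s ha ih => rw [Finset.sum_insert ha, Finset.sum_insert ha, add_apply, ih]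
  simp only [divGrad, divGradC, opP, neg_apply, h1, h2]
  rfl

lemma re_P {d : ℕ} (A : Ed d → Fin d → Fin d → ℝ) (u : Sc d) :
    (inner ℂ (toL u) (toL (opP A u))).re = (inner ℂ (toL u) (LL A u)).re - ‖toL u‖ ^ 2 := by
  rw [LL_apply, inner_add_right, Complex.add_re]
  have : ‖toL u‖ ^ 2 = (inner ℂ (toL u) (toL u)).re := norm_sq_eq_re_inner (𝕜 := ℂ) (toL u)
  rw [this]; ring

lemma est0 {d : ℕ} {A : Ed d → Fin d → Fin d → ℝ} {lam M : ℝ} (hl : 0 < lam) (hA : Coef A lam M)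
    (u : Sc d) : ‖toL u‖ ≤ ‖LL A u‖ := by
  have h := energy hA u
  rw [re_P] at h
  have h1 : (inner ℂ (toL u) (LL A u)).re ≤ ‖toL u‖ * ‖LL A u‖ :=
    (Complex.re_le_norm _).trans (norm_inner_le_norm _ _)
  have h2 : 0 ≤ lam * ∑ j, ‖toL (dd j u)‖ ^ 2 := by positivity
  by_contra hc
  push Not at hc
  have h3 : 0 ≤ ‖LL A u‖ := norm_nonneg _
  nlinarith [norm_nonneg (toL u)]

lemma est1' {d : ℕ} {A : Ed d → Fin d → Fin d → ℝ} {lam M : ℝ} (hl : 0 < lam) (hA : Coef A lam M)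
    (u : Sc d) (l : Fin d) :
    lam * ‖toL (dd l u)‖ ^ 2 ≤ (inner ℂ (toL u) (toL (opP A u))).re := by
  refine le_trans ?_ (energy hA u)
  gcongr
  exact Finset.single_le_sum (f := fun j => ‖toL (dd j u)‖ ^ 2) (fun j _ => by positivity)
    (Finset.mem_univ l)

lemma est1 {d : ℕ} {A : Ed d → Fin d → Fin d → ℝ} {lam M : ℝ} (hl : 0 < lam) (hA : Coef A lam M)
    (u : Sc d) (l : Fin d) : ‖toL (dd l u)‖ ≤ (Real.sqrt lam)⁻¹ * ‖LL A u‖ := by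
  have h := est1' hl hA u l
  rw [re_P] at h
  have h1 : (inner ℂ (toL u) (LL A u)).re ≤ ‖toL u‖ * ‖LL A u‖ :=
    (Complex.re_le_norm _).trans (norm_inner_le_norm _ _)
  have h0 := est0 hl hA u
  have h2 : lam * ‖toL (dd l u)‖ ^ 2 ≤ ‖LL A u‖ ^ 2 := by nlinarith [norm_nonneg (toL u), norm_nonneg (LL A u)]
  have h3 : Real.sqrt lam * ‖toL (dd l u)‖ ≤ ‖LL A u‖ := by
    apply le_of_sq_le_sq _ (norm_nonneg _)
    rw [mul_pow, Real.sq_sqrt hl.le]; exact h2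
  have hs : 0 < Real.sqrt lam := Real.sqrt_pos.2 hl
  rw [inv_mul_eq_div, le_div_iff₀ hs]; linarith

lemma est2' {d : ℕ} {A : Ed d → Fin d → Fin d → ℝ} {lam M : ℝ} (hl : 0 < lam) (hM : 0 ≤ M)
    (hA : Coef A lam M) (u : Sc d) (j l : Fin d) :
    ‖toL (dd j (dd l u))‖ ≤ lam⁻¹ * (‖toL (opP A u)‖ + d * M * ∑ k, ‖toL (dd k u)‖) := by
  have h := second hA u l
  set a : Fin d → ℝ := fun j => ‖toL (dd j (dd l u))‖ with ha
  set s := Real.sqrt (∑ j, a j ^ 2) with hs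
  have hs2 : s ^ 2 = ∑ j, a j ^ 2 := Real.sq_sqrt (by positivity)
  have hs0 : 0 ≤ s := Real.sqrt_nonneg _
  have has : ∀ i, a i ≤ s := fun i => by
    apply Real.le_sqrt_of_sq_le
    exact Finset.single_le_sum (f := fun j => a j ^ 2) (fun j _ => by positivity)
      (Finset.mem_univ i)
  have h1 : lam * s ^ 2 ≤ s * (‖toL (opP A u)‖ + d * M * ∑ k, ‖toL (dd k u)‖) := by
    rw [hs2]
    refine h.trans ?_
    rw [mul_add]
    apply add_le_add
    · exact mul_le_mul_of_nonneg_right (has l) (norm_nonneg _)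
    · calc _ ≤ ∑ j : Fin d, ∑ k, s * (M * ‖toL (dd k u)‖) := by
            gcongr with j _ k _; exact has j
        _ = _ := by
            simp only [Finset.sum_const, Finset.card_univ, Fintype.card_fin, nsmul_eq_mul,
              ← Finset.mul_sum]; ring
  refine (has j).trans ?_
  rw [inv_mul_eq_div, le_div_iff₀ hl]
  rcases hs0.eq_or_lt with h0 | h0
  · rw [← h0]; simp; positivity
  · nlinarith

lemma est2 {d : ℕ} {A : Ed d → Fin d → Fin d → ℝ} {lam M : ℝ} (hl : 0 < lam) (hM : 0 ≤ M)
    (hA : Coef A lam M) (u : Sc d) (j l : Fin d) :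
    ‖toL (dd j (dd l u))‖ ≤ lam⁻¹ * (2 + d * M * (d * (Real.sqrt lam)⁻¹)) * ‖LL A u‖ := by
  refine (est2' hl hM hA u j l).trans ?_
  rw [mul_assoc lam⁻¹ _ ‖LL A u‖]
  refine mul_le_mul_of_nonneg_left ?_ (inv_nonneg.2 hl.le)
  rw [add_mul]
  apply add_le_add
  · have : toL (opP A u) = LL A u - toL u := by rw [LL_apply]; abel
    rw [this]
    refine (norm_sub_le _ _).trans ?_
    linarith [est0 hl hA u]
  · rw [mul_assoc _ _ ‖LL A u‖]
    gcongr
    refine (Finset.sum_le_sum fun k _ => est1 hl hA u k).trans (le_of_eq ?_)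
    simp; ring

lemma opP_bound {d : ℕ} {A : Ed d → Fin d → Fin d → ℝ} {lam M : ℝ}
    (hA : Coef A lam M) (hM : 0 ≤ M) (u : Sc d) {C : ℝ} (h1 : ∀ k, ‖toL (dd k u)‖ ≤ C)
    (h2 : ∀ j k, ‖toL (dd j (dd k u))‖ ≤ C) : ‖toL (opP A u)‖ ≤ d * (d * (2 * M)) * C := by
  simp only [opP, map_neg, norm_neg, map_sum]
  have : ∀ j k, ‖toL (dd j (mulS (fun x => A x j k) (dd k u)))‖ ≤ 2 * M * C := by
    intro j k
    rw [leib (hA.smooth j k), map_add]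
    refine (norm_add_le _ _).trans ?_
    have e1 := mulS_bound (hA.smooth j k).tg (hA.bd j k) (dd j (dd k u))
    have e2 := mulS_bound (fderivE_tg (hA.smooth j k) j) (hA.bd1 j k j) (dd k u)
    have e3 := mul_le_mul_of_nonneg_left (h2 j k) hM
    have e4 := mul_le_mul_of_nonneg_left (h1 k) hM
    linarith
  refine (norm_sum_le _ _).trans ?_
  refine (Finset.sum_le_sum fun j _ => (norm_sum_le _ _).trans
    (Finset.sum_le_sum fun k _ => this j k)).trans (le_of_eq ?_)
  simp; ring

/-- The homotopy of coefficients from the identity to `G`. -/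
def At {d : ℕ} (G : Ed d → Fin d → Fin d → ℝ) (t : ℝ) : Ed d → Fin d → Fin d → ℝ :=
  fun x j k => (1 - t) * (if j = k then 1 else 0) + t * G x j k

lemma opP_At {d : ℕ} {G : Ed d → Fin d → Fin d → ℝ} (hG : ∀ j k, CbSmooth d fun x => G x j k)
    (t : ℝ) (u : Sc d) : LL (At G t) u = LL (At G 0) u + (t:ℂ) • (LL G u - LL (At G 0) u) := by
  have htg : ∀ t j k, (fun x => At G t x j k).HasTemperateGrowth := by
    intro t j k
    have := (hG j k).tg
    unfold At
    fun_prop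
  have h1 : ∀ j k, mulS (fun x => At G t x j k) (dd k u) = mulS (fun x => At G 0 x j k) (dd k u)
      + (t:ℂ) • (mulS (fun x => G x j k) (dd k u) - mulS (fun x => At G 0 x j k) (dd k u)) := by
    intro j k
    ext x
    simp only [add_apply, smul_apply, sub_apply]
    rw [mulS_apply (htg t j k), mulS_apply (htg 0 j k), mulS_apply (hG j k).tg]
    simp only [At]
    push_cast
    simp only [smul_eq_mul]
    ring
  simp only [LL_apply, opP, h1]
  simp only [map_add, map_neg, map_smul, map_sub, map_sum, Finset.sum_add_distrib, ← Finset.smul_sum,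
    Finset.sum_sub_distrib]
  module

lemma At_Coef {d : ℕ} {G : Ed d → Fin d → Fin d → ℝ} {lam M : ℝ} (hG : Coef G lam M)
    (hl : lam ≤ 1) (hM : 1 ≤ M) {t : ℝ} (h0 : 0 ≤ t) (h1 : t ≤ 1) : Coef (At G t) lam M where
  smooth j k := by
    obtain ⟨hs, hb⟩ := hG.smooth j k
    refine ⟨by unfold At; fun_prop, fun n => ?_⟩
    obtain ⟨C, hC⟩ := hb n
    have hc : ∃ C', ∀ x : Ed d, ‖iteratedFDeriv ℝ n (fun _ : Ed d => (1 - t) * (if j = k then (1:ℝ) else 0)) x‖ ≤ C' := by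
      rcases n with _ | n
      · exact ⟨_, fun x => by rw [norm_iteratedFDeriv_zero]⟩
      · exact ⟨0, fun x => by rw [iteratedFDeriv_const_of_ne (by simp)]; simp⟩
    obtain ⟨C', hC'⟩ := hc
    refine ⟨C' + |t| * C, fun x => ?_⟩
    have e : (fun x => At G t x j k) = (fun _ : Ed d => (1 - t) * (if j = k then (1:ℝ) else 0))
        + t • (fun x => G x j k) := by
      ext x; simp [At]
    have hts : ContDiff ℝ n (t • (fun x => G x j k)) :=
      (hs.const_smul t).of_le (by exact_mod_cast le_top)
    rw [e, iteratedFDeriv_add_apply (contDiff_const.contDiffAt) hts.contDiffAt,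
      iteratedFDeriv_const_smul_apply ((hs.of_le (by exact_mod_cast le_top)).contDiffAt)]
    refine (norm_add_le _ _).trans (add_le_add (hC' x) ?_)
    rw [norm_smul, Real.norm_eq_abs]
    gcongr
    exact hC x
  bd j k x := by
    have := hG.bd j k x
    unfold At
    have e1 : |(1 - t) * (if j = k then (1:ℝ) else 0)| ≤ (1 - t) * M := by
      rw [abs_mul, abs_of_nonneg (by linarith : 0 ≤ 1 - t)]
      refine mul_le_mul_of_nonneg_left ?_ (by linarith)
      split_ifs <;> simp <;> linarith
    have e2 : |t * G x j k| ≤ t * M := by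
      rw [abs_mul, abs_of_nonneg h0]
      gcongr
    refine (abs_add_le _ _).trans ?_
    linarith
  bd1 j k l x := by
    have := hG.bd1 j k l x
    have hd : DifferentiableAt ℝ (fun x => G x j k) x :=
      ((hG.smooth j k).1.differentiable (by simp)).differentiableAt
    unfold At
    rw [fderiv_const_add, fderiv_const_mul hd]
    simp only [smul_apply, smul_eq_mul, abs_mul, abs_of_nonneg h0]
    nlinarith [abs_nonneg (fderiv ℝ (fun x => G x j k) x (eb l))]
  ell x v := by
    have := hG.ell x v
    have e : ∑ j, ∑ k, At G t x j k * v j * v k = (1 - t) * ∑ j, v j ^ 2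
        + t * ∑ j, ∑ k, G x j k * v j * v k := by
      have : ∀ j k, At G t x j k * v j * v k = (1 - t) * (if j = k then v j * v k else 0)
        + t * (G x j k * v j * v k) := by
        intro j k; unfold At; split_ifs <;> ring
      simp only [this, Finset.sum_add_distrib, ← Finset.mul_sum]
      congr 2
      simp [sq]
    rw [e]
    have hp : 0 ≤ ∑ j, v j ^ 2 := by positivity
    nlinarith [mul_le_mul_of_nonneg_left this h0, mul_nonneg (mul_nonneg (sub_nonneg.2 h1) hp) (sub_nonneg.2 hl)]

lemma toL_dense {d : ℕ} : DenseRange (toL : Sc d → L2 d) :=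
  SchwartzMap.denseRange_toLpCLM (by simp)

lemma fourier_dd {d : ℕ} (j : Fin d) (w : Sc d) (ξ : Ed d) :
    𝓕 (dd j w) ξ = (2 * π * I) * (ξ j : ℂ) * 𝓕 w ξ := by
  rw [dd_eq, SchwartzMap.fourier_lineDerivOp_eq]
  have : (fun x : Ed d => inner ℝ x (eb j)).HasTemperateGrowth := by fun_prop
  rw [smul_apply, SchwartzMap.smulLeftCLM_apply_apply this]
  simp [EuclideanSpace.inner_single_right, eb]
  ring

lemma LL0_surj {d : ℕ} (G : Ed d → Fin d → Fin d → ℝ) (v : Sc d) :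
    ∃ u : Sc d, LL (At G 0) u = toL v := by
  have h2 : (fun ξ : Ed d => (1 + ‖(2 * π) • ξ‖ ^ 2) ^ (-1 : ℝ)).HasTemperateGrowth :=
    (Function.hasTemperateGrowth_one_add_norm_sq_rpow (Ed d) (-1)).comp
      (g := fun y : Ed d => (1 + ‖y‖ ^ 2) ^ (-1 : ℝ))
      (f := fun ξ : Ed d => (2 * π) • ξ) (by fun_prop)
  set u : Sc d := 𝓕⁻ (mulS (fun ξ : Ed d => (1 + ‖(2 * π) • ξ‖ ^ 2) ^ (-1 : ℝ)) (𝓕 v)) with hu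
  refine ⟨u, ?_⟩
  have hF : 𝓕 u = mulS (fun ξ : Ed d => (1 + ‖(2 * π) • ξ‖ ^ 2) ^ (-1 : ℝ)) (𝓕 v) := by
    rw [hu, FourierTransform.fourier_fourierInv_eq]
  have hP : opP (At G 0) u = -∑ j, dd j (dd j u) := by
    unfold opP
    congr 1
    refine Finset.sum_congr rfl fun j _ => ?_
    rw [Finset.sum_eq_single j]
    · congr 1
      ext x
      rw [mulS_apply (by unfold At; simp)]
      simp [At]
    · intro k _ hk
      have : mulS (fun x => At G 0 x j k) (dd k u) = 0 := by
        ext x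
        have : (fun x => At G 0 x j k) = fun x => (0:ℝ) := by ext x; simp [At, hk.symm]
        rw [this, mulS_apply (by fun_prop)]
        simp
      rw [this, map_zero]
    · simp
  rw [LL_apply, ← map_add]
  congr 1
  have key : 𝓕 (opP (At G 0) u + u) = 𝓕 v := by
    ext ξ
    have hF1 : 𝓕 u ξ = ((1 + ‖(2 * π) • ξ‖ ^ 2 : ℝ) : ℂ)⁻¹ * 𝓕 v ξ := by
      rw [hF, mulS_apply h2, Real.rpow_neg_one]
      push_cast; rfl
    have hsum : 𝓕 (∑ j, dd j (dd j u)) ξ = ∑ j, 𝓕 (dd j (dd j u)) ξ := by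
      have h3 : ∀ (s : Finset (Fin d)) (F : Fin d → Sc d), 𝓕 (∑ j ∈ s, F j) ξ
          = ∑ j ∈ s, 𝓕 (F j) ξ := by
        intro s F
        induction s using Finset.induction_on with
        | empty => simp [FourierTransform.fourier_zero]
        | insert a s ha ih =>
          rw [Finset.sum_insert ha, Finset.sum_insert ha, FourierTransform.fourier_add, add_apply, ih]
      exact h3 _ _
    have hn : ((1 + ‖(2 * π) • ξ‖ ^ 2 : ℝ) : ℂ) = 1 + (2 * π) ^ 2 * ∑ j, (ξ j : ℂ) ^ 2 := by
      rw [norm_smul, mul_pow, EuclideanSpace.norm_sq_eq, Real.norm_of_nonneg (by positivity)]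
      simp
    have hne : ((1 + ‖(2 * π) • ξ‖ ^ 2 : ℝ) : ℂ) ≠ 0 := by
      norm_cast; positivity
    rw [hP, FourierTransform.fourier_add, FourierTransform.fourier_neg, add_apply, neg_apply, hsum]
    simp only [fourier_dd]
    have : -∑ j, 2 * π * I * (ξ j : ℂ) * (2 * π * I * (ξ j : ℂ) * 𝓕 u ξ) + 𝓕 u ξ
       = ((1 + ‖(2 * π) • ξ‖ ^ 2 : ℝ) : ℂ) * 𝓕 u ξ := by
      rw [hn, add_mul, one_mul, add_comm, Finset.mul_sum, Finset.sum_mul, ← Finset.sum_neg_distrib]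
      congr 1
      refine Finset.sum_congr rfl fun j _ => ?_
      linear_combination (-4 * π ^ 2 * (ξ j : ℂ) ^ 2 * 𝓕 u ξ) * Complex.I_sq
    rw [this, hF1, mul_inv_cancel_left₀ hne]
  have := congrArg (fun w : Sc d => 𝓕⁻ w) key
  simpa using this

lemma dense_of {d : ℕ} (L : Sc d →L[ℂ] L2 d)
    (h : ∀ w : L2 d, (∀ u, inner ℂ (L u) w = 0) → w = 0) : DenseRange L := by
  have h1 : (L.toLinearMap.range).topologicalClosure = ⊤ := by
    rw [Submodule.topologicalClosure_eq_top_iff, Submodule.eq_bot_iff]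
    intro w hw
    apply h w
    intro u
    exact (Submodule.mem_orthogonal _ _).1 hw _ ⟨u, rfl⟩
  have h2 := Submodule.dense_iff_topologicalClosure_eq_top.2 h1
  intro x
  have h3 := h2 x
  have h4 : ((L.toLinearMap.range : Submodule ℂ (L2 d)) : Set (L2 d)) = Set.range L := rfl
  rwa [h4] at h3

lemma dense_step {d : ℕ} (L L' : Sc d →L[ℂ] L2 d) (hL : DenseRange L) {ε : ℝ} (hε : ε < 1)
    (h : ∀ u, ‖L u - L' u‖ ≤ ε * ‖L u‖) : DenseRange L' := by
  apply dense_of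
  intro w hw
  have h1 : ∀ u, ‖inner ℂ (L u) w‖ ≤ ε * ‖L u‖ * ‖w‖ := by
    intro u
    have : inner ℂ (L u) w = inner ℂ (L u - L' u) w := by rw [inner_sub_left, hw, sub_zero]
    rw [this]
    refine (norm_inner_le_norm _ _).trans ?_
    gcongr
    exact h u
  have h2 : ∀ v : L2 d, ‖inner ℂ v w‖ ≤ ε * ‖v‖ * ‖w‖ := by
    intro v
    refine hL.induction_on (p := fun v => ‖inner ℂ v w‖ ≤ ε * ‖v‖ * ‖w‖) v ?_ h1
    exact isClosed_le (by fun_prop) (by fun_prop)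
  have h3 := h2 w
  rw [inner_self_eq_norm_sq_to_K] at h3
  have h4 : ‖w‖ ^ 2 ≤ ε * ‖w‖ ^ 2 := by
    have : ‖((‖w‖ : ℂ)) ^ 2‖ = ‖w‖ ^ 2 := by simp
    rw [← this]; refine h3.trans (le_of_eq ?_); rw [this]; ring
  by_contra hne
  have : 0 < ‖w‖ := norm_pos_iff.2 hne
  nlinarith [pow_pos this 2]

lemma LL_dense {d : ℕ} {G : Ed d → Fin d → Fin d → ℝ} {lam M : ℝ} (hl0 : 0 < lam) (hG : Coef G lam M)
    (hl : lam ≤ 1) (hM : 1 ≤ M) : DenseRange (LL G) := by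
  have hM0 : 0 ≤ M := by linarith
  set C1 := (Real.sqrt lam)⁻¹
  set C2 := lam⁻¹ * (2 + d * M * (d * (Real.sqrt lam)⁻¹))
  set C := d * (d * (2 * M)) * (C1 + C2) with hC
  have hC1 : 0 ≤ C1 := by positivity
  have hC2 : 0 ≤ C2 := by positivity
  have hC0 : 0 ≤ C := by positivity
  have key : ∀ t s : ℝ, 0 ≤ t → t ≤ 1 → ∀ u, ‖LL (At G t) u - LL (At G s) u‖
      ≤ |t - s| * (2 * C) * ‖LL (At G t) u‖ := by
    intro t s ht0 ht1 u
    have hA := At_Coef hG hl hM ht0 ht1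
    have e : LL (At G t) u - LL (At G s) u = ((t - s : ℝ) : ℂ) • (toL (opP G u) - toL (opP (At G 0) u)) := by
      rw [opP_At hG.smooth t, opP_At hG.smooth s, LL_apply G, LL_apply (At G 0)]
      push_cast
      module
    have b1 : ∀ k, ‖toL (dd k u)‖ ≤ (C1 + C2) * ‖LL (At G t) u‖ := fun k =>
      (est1 hl0 hA u k).trans (by gcongr; linarith)
    have b2 : ∀ j k, ‖toL (dd j (dd k u))‖ ≤ (C1 + C2) * ‖LL (At G t) u‖ := fun j k =>
      (est2 hl0 hM0 hA u j k).trans (by gcongr; linarith)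
    have b3 := opP_bound hG hM0 u b1 b2
    have b4 := opP_bound (At_Coef hG hl hM le_rfl zero_le_one) hM0 u b1 b2
    rw [e, norm_smul, mul_assoc]
    gcongr
    · rw [Complex.norm_real, Real.norm_eq_abs]
    · refine (norm_sub_le _ _).trans ?_
      rw [hC]; linarith
  obtain ⟨N, hN⟩ := exists_nat_gt (2 * C)
  have hN0 : (0:ℝ) < N := lt_of_le_of_lt (by positivity) hN
  have ind : ∀ k : ℕ, k ≤ N → DenseRange (LL (At G (k / N))) := by
    intro k
    induction k with
    | zero =>
      intro _
      simp only [Nat.cast_zero, zero_div]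
      refine Dense.mono ?_ toL_dense
      rintro _ ⟨v, rfl⟩
      obtain ⟨u, hu⟩ := LL0_surj G v
      exact ⟨u, hu⟩
    | succ k ih =>
      intro hk
      refine dense_step _ _ (ih (by omega)) (ε := 1 / N * (2 * C)) ?_ ?_
      · rw [one_div, inv_mul_eq_div, div_lt_one hN0]; exact hN
      · intro u
        refine (key _ _ (by positivity) ?_ u).trans (le_of_eq ?_)
        · rw [div_le_one hN0]; exact_mod_cast (by omega : k ≤ N)
        · congr 2
          rw [← sub_div, abs_div, abs_of_pos hN0]
          push_cast
          simp
  have := ind N le_rfl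
  rw [div_self hN0.ne'] at this
  convert this using 3
  ext x j k
  simp [At]

lemma Standing.coef {d : ℕ} {G : Ed d → Fin d → Fin d → ℝ} (hG : Standing d G) :
    ∃ lam M : ℝ, 0 < lam ∧ lam ≤ 1 ∧ 1 ≤ M ∧ Coef G lam M := by
  obtain ⟨h1, h2, lam, Lam, hl, h3⟩ := hG
  have hb : ∀ j k, ∃ C : ℝ, 0 ≤ C ∧ (∀ x, |G x j k| ≤ C) ∧
      ∀ l x, |fderiv ℝ (fun x => G x j k) x (eb l)| ≤ C := by
    intro j k
    obtain ⟨C0, hC0⟩ := (h1 j k).2 0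
    obtain ⟨C1, hC1⟩ := (h1 j k).2 1
    have e0 : ∀ x, |G x j k| ≤ C0 := fun x => by
      have := hC0 x
      rwa [norm_iteratedFDeriv_zero] at this
    have e1 : ∀ l x, |fderiv ℝ (fun x => G x j k) x (eb l)| ≤ C1 := fun l x => by
      have := hC1 x
      rw [norm_iteratedFDeriv_one] at this
      refine (ContinuousLinearMap.le_opNorm (fderiv ℝ (fun x => G x j k) x) (eb l)).trans ?_
      simpa [eb] using this
    refine ⟨max C0 (max C1 0), by simp, fun x => (e0 x).trans (by simp), fun l x => (e1 l x).trans (by simp)⟩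
  choose C hC0 hC1 hC2 using hb
  have hs : ∀ j k, C j k ≤ ∑ j, ∑ k, C j k := fun j k =>
    (Finset.single_le_sum (f := fun k => C j k) (fun k _ => hC0 j k) (Finset.mem_univ k)).trans
     (Finset.single_le_sum (f := fun j => ∑ k, C j k) (fun j _ => Finset.sum_nonneg fun k _ => hC0 j k)
       (Finset.mem_univ j))
  have hs0 : 0 ≤ ∑ j, ∑ k, C j k := Finset.sum_nonneg fun j _ => Finset.sum_nonneg fun k _ => hC0 j k
  refine ⟨min lam 1, 1 + ∑ j, ∑ k, C j k, lt_min hl one_pos, min_le_right _ _, by linarith, h1, ?_, ?_, ?_⟩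
  · intro j k x; linarith [hC1 j k x, hs j k]
  · intro j k l x; linarith [hC2 j k l x, hs j k]
  · intro x v
    refine le_trans ?_ (h3 x v).1
    gcongr
    exact min_le_left _ _

/-- Complex conjugation on Schwartz functions. -/
def cj {d : ℕ} (u : Sc d) : Sc d := SchwartzMap.postcompCLM (Complex.conjCLE : ℂ →L[ℝ] ℂ) u

lemma cj_apply {d : ℕ} (u : Sc d) (x : Ed d) : cj u x = conj (u x) := rfl

lemma cj_cj {d : ℕ} (u : Sc d) : cj (cj u) = u := by
  ext x; simp [cj_apply]

lemma dd_cj {d : ℕ} (j : Fin d) (u : Sc d) : dd j (cj u) = cj (dd j u) := by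
  ext x
  have h1 : (⇑(cj u) : Ed d → ℂ) = (Complex.conjCLE : ℂ →L[ℝ] ℂ) ∘ u := rfl
  rw [cj_apply, dd_apply, dd_apply, h1,
    ((Complex.conjCLE : ℂ →L[ℝ] ℂ).hasFDerivAt.comp x u.differentiableAt.hasFDerivAt).fderiv]
  rfl

lemma cj_mulS {d : ℕ} {a : Ed d → ℝ} (ha : a.HasTemperateGrowth) (u : Sc d) :
    mulS a (cj u) = cj (mulS a u) := by
  ext x
  rw [cj_apply, mulS_apply ha, mulS_apply ha, cj_apply]; simp

lemma cj_sum {d : ℕ} (s : Finset (Fin d)) (F : Fin d → Sc d) : cj (∑ j ∈ s, F j) = ∑ j ∈ s, cj (F j) :=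
  map_sum (SchwartzMap.postcompCLM (Complex.conjCLE : ℂ →L[ℝ] ℂ)) F s

lemma cj_opP {d : ℕ} {G : Ed d → Fin d → Fin d → ℝ} (hG : ∀ j k, CbSmooth d fun x => G x j k)
    (u : Sc d) : opP G (cj u) = cj (opP G u) := by
  have hn : ∀ v : Sc d, cj (-v) = - cj v := fun v =>
    map_neg (SchwartzMap.postcompCLM (Complex.conjCLE : ℂ →L[ℝ] ℂ)) v
  simp only [opP, hn, cj_sum]
  simp only [dd_cj, cj_mulS (hG _ _).tg]

lemma pair_eq {d : ℕ} (f : L2 d) (u : Sc d) : ∫ x, f x * u x = inner ℂ (toL (cj u)) f := by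
  rw [L2.inner_def]
  apply integral_congr_ae
  filter_upwards [toL_ae (cj u)] with x h
  rw [h, RCLike.inner_apply, cj_apply]; simp

/-- The symbol `1/(1+λ₊)`. -/
def kap : ℝ → ℂ := fun lam => (((1 + max lam 0)⁻¹ : ℝ) : ℂ)

lemma one_add_max_pos (lam : ℝ) : 0 < 1 + max lam 0 := by positivity

lemma kap_good : GoodSymbol kap := by
  refine ⟨?_, 1, fun lam h => ?_⟩
  · unfold kap
    refine Complex.continuous_ofReal.comp (Continuous.inv₀ (by fun_prop) fun x => (one_add_max_pos x).ne')
  · unfold kap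
    rw [Complex.norm_real, Real.norm_of_nonneg (by positivity)]
    apply inv_le_one_of_one_le₀
    simp

lemma res_ne (lam : ℝ) : (lam : ℂ) - I ≠ 0 := by
  intro h
  have := congrArg Complex.im h
  simp at this

lemma res_good : GoodSymbol (fun lam : ℝ => ((lam : ℂ) - I)⁻¹) := by
  refine ⟨Continuous.inv₀ (by fun_prop) fun x => res_ne x, 1, fun lam _ => ?_⟩
  rw [norm_inv]
  apply inv_le_one_of_one_le₀
  have := Complex.abs_im_le_norm ((lam : ℂ) - I)
  simpa using this

lemma GoodSymbol.mul {φ ψ : ℝ → ℂ} (h1 : GoodSymbol φ) (h2 : GoodSymbol ψ) :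
    GoodSymbol (fun x => φ x * ψ x) := by
  obtain ⟨c1, C1, b1⟩ := h1
  obtain ⟨c2, C2, b2⟩ := h2
  refine ⟨c1.mul c2, C1 * C2, fun lam h => ?_⟩
  rw [norm_mul]
  exact mul_le_mul (b1 _ h) (b2 _ h) (norm_nonneg _) ((norm_nonneg _).trans (b1 _ h))

lemma GoodSymbol.cmul {φ : ℝ → ℂ} (h1 : GoodSymbol φ) (c : ℂ) :
    GoodSymbol (fun x => c * φ x) := by
  obtain ⟨c1, C1, b1⟩ := h1
  refine ⟨c1.const_mul _, ‖c‖ * C1, fun lam h => ?_⟩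
  rw [norm_mul]
  exact mul_le_mul_of_nonneg_left (b1 _ h) (norm_nonneg _)

lemma GoodSymbol.add {φ ψ : ℝ → ℂ} (h1 : GoodSymbol φ) (h2 : GoodSymbol ψ) :
    GoodSymbol (fun x => φ x + ψ x) := by
  obtain ⟨c1, C1, b1⟩ := h1
  obtain ⟨c2, C2, b2⟩ := h2
  refine ⟨c1.add c2, C1 + C2, fun lam h => ?_⟩
  exact (norm_add_le _ _).trans (add_le_add (b1 _ h) (b2 _ h))

lemma K_eq {d : ℕ} {G : Ed d → Fin d → Fin d → ℝ} (S : SpectralCalc d G) (f : L2 d) :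
    S.map kap f = S.map (fun lam : ℝ => ((lam : ℂ) - I)⁻¹) (f - (1 + I) • S.map kap f) := by
  have h1 : S.map kap = S.map (fun lam : ℝ => ((lam : ℂ) - I)⁻¹ + (-(1 + I)) * (((lam : ℂ) - I)⁻¹ * kap lam)) := by
    apply S.map_congr _ _ kap_good (res_good.add ((res_good.mul kap_good).cmul _))
    intro lam h
    have h2 := res_ne lam
    have h3 : (1 + lam : ℂ) ≠ 0 := by norm_cast; positivity
    simp only [kap, max_eq_left h]
    push_cast
    field_simp
    ring
  rw [S.map_add _ _ res_good ((res_good.mul kap_good).cmul _),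
    S.map_smul _ _ (res_good.mul kap_good), S.map_mul _ _ res_good kap_good] at h1
  conv_lhs => rw [h1]
  simp only [add_apply, smul_apply, ContinuousLinearMap.comp_apply, map_sub, map_smul]
  module

lemma K_weak {d : ℕ} {G : Ed d → Fin d → Fin d → ℝ} (hG : ∀ j k, CbSmooth d fun x => G x j k)
    (S : SpectralCalc d G) (f : L2 d) (u : Sc d) :
    inner ℂ (LL G u) (S.map kap f) = inner ℂ (toL u) f := by
  have h := S.map_resolvent I (by simp) (f - (1 + I) • S.map kap f) (cj u)
  rw [← K_eq, opP_divGrad hG, pair_eq, pair_eq, pair_eq, cj_opP hG, cj_cj, cj_cj, inner_sub_right,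
    inner_smul_right] at h
  rw [LL_apply, inner_add_left]
  linear_combination h

lemma K_adj {d : ℕ} {G : Ed d → Fin d → Fin d → ℝ} (S : SpectralCalc d G) (f g : L2 d) :
    inner ℂ (S.map kap f) g = inner ℂ f (S.map kap g) := by
  rw [← ContinuousLinearMap.adjoint_inner_right, S.map_star _ kap_good]
  congr 3
  ext x
  simp [kap]

lemma K_LL {d : ℕ} {G : Ed d → Fin d → Fin d → ℝ} (hG : ∀ j k, CbSmooth d fun x => G x j k)
    (S : SpectralCalc d G) (u : Sc d) : S.map kap (LL G u) = toL u := by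
  apply ext_inner_right ℂ
  intro f
  rw [K_adj, K_weak hG]

lemma ops {d : ℕ} {G : Ed d → Fin d → Fin d → ℝ} (hG : Standing d G) (S : SpectralCalc d G) :
    ∃ (B : Fin d → L2 d →L[ℂ] L2 d) (C : Fin d → Fin d → L2 d →L[ℂ] L2 d) (c : ℝ), 0 ≤ c ∧
      (∀ j u, B j (LL G u) = toL (dd j u)) ∧ (∀ l j u, C l j (LL G u) = toL (dd l (dd j u))) ∧
      DenseRange (LL G) ∧
      (∀ j h (u : Sc d), (∫ x, (B j h) x * u x) = - ∫ x, (S.map kap h) x * pd d j u x) ∧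
      (∀ j h, ‖B j h‖ ^ 2 ≤ c * (inner ℂ (S.map kap h) (h - S.map kap h)).re) ∧
      (∀ l j h, ‖C l j h‖ ≤ c * (‖h - S.map kap h‖ + ∑ k, ‖B k h‖)) := by
  obtain ⟨lam, M, hl0, hl, hM, hA⟩ := hG.coef
  have hd := LL_dense hl0 hA hl hM
  have hM0 : 0 ≤ M := by linarith
  have hext : ∀ D : Sc d →L[ℂ] L2 d, (∃ c, ∀ u, ‖D u‖ ≤ c * ‖LL G u‖) →
      ∃ B : L2 d →L[ℂ] L2 d, ∀ u, B (LL G u) = D u := fun D hD =>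
    ⟨D.toLinearMap.extendOfNorm (LL G).toLinearMap, fun u =>
      LinearMap.extendOfNorm_eq (f := D.toLinearMap) (e := (LL G).toLinearMap) hd hD u⟩
  choose B hB using fun j => hext (toL.comp (dd j)) ⟨_, fun u => est1 hl0 hA u j⟩
  choose C hC using fun l j => hext (toL.comp ((dd l).comp (dd j)))
    ⟨_, fun u => est2 hl0 hM0 hA u l j⟩
  have hB' : ∀ j u, B j (LL G u) = toL (dd j u) := fun j u => by rw [hB]; rfl
  have hC' : ∀ l j u, C l j (LL G u) = toL (dd l (dd j u)) := fun l j u => by rw [hC]; rfl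
  have hK := K_LL hA.smooth S
  have hL : ∀ u, LL G u - S.map kap (LL G u) = toL (opP G u) := fun u => by
    rw [hK, LL_apply]; abel
  set c := lam⁻¹ * (1 + d * M) with hc
  have hc1 : lam⁻¹ ≤ c := by
    rw [hc]; nlinarith [inv_pos.2 hl0, mul_nonneg (inv_pos.2 hl0).le (mul_nonneg (Nat.cast_nonneg (α := ℝ) d) hM0)]
  refine ⟨B, C, c, by positivity, hB', hC', hd, ?_, ?_, ?_⟩
  · intro j h u
    have e : pd d j (⇑u) = ⇑(dd j u) := rfl
    rw [e, pair_eq, pair_eq]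
    refine hd.induction_on (p := fun h => inner ℂ (toL (cj u)) (B j h)
      = -inner ℂ (toL (cj (dd j u))) (S.map kap h)) h ?_ ?_
    · exact isClosed_eq (by fun_prop) (by fun_prop)
    · intro v
      rw [hB', hK, ibp, dd_cj]
  · intro j h
    refine hd.induction_on (p := fun h => ‖B j h‖ ^ 2 ≤
      c * (inner ℂ (S.map kap h) (h - S.map kap h)).re) h ?_ ?_
    · exact isClosed_le (by fun_prop) (by fun_prop)
    · intro u
      rw [hB', hL, hK]
      have h1 := est1' hl0 hA u j
      have h2 : ‖toL (dd j u)‖ ^ 2 ≤ lam⁻¹ * (inner ℂ (toL u) (toL (opP G u))).re := by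
        rw [inv_mul_eq_div, le_div_iff₀ hl0]; linarith
      refine h2.trans ?_
      have h3 : 0 ≤ lam * ‖toL (dd j u)‖ ^ 2 := by positivity
      exact mul_le_mul_of_nonneg_right hc1 (h3.trans h1)
  · intro l j h
    refine hd.induction_on (p := fun h => ‖C l j h‖ ≤
      c * (‖h - S.map kap h‖ + ∑ k, ‖B k h‖)) h ?_ ?_
    · exact isClosed_le (by fun_prop) (by fun_prop)
    · intro u
      simp only [hB', hC', hL]
      refine (est2' hl0 hM0 hA u l j).trans ?_
      rw [hc, mul_assoc lam⁻¹]
      refine mul_le_mul_of_nonneg_left ?_ (inv_pos.2 hl0).le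
      have e1 : 0 ≤ d * M * ‖toL (opP G u)‖ := by positivity
      have e2 : 0 ≤ ∑ k, ‖toL (dd k u)‖ := by positivity
      nlinarith

open scoped BoundedContinuousFunction in
lemma sig_exists (φr : ℝ → ℝ) (hφ1 : Continuous φr) {b : ℝ} (hb0 : 0 ≤ b)
    (hb : ∀ x, (1 + max x 0) ^ 2 * |φr x| ≤ b) :
    ∃ σ : ℝ → (ℝ →ᵇ ℂ), Continuous σ ∧
      ∀ t x, σ t x = (((1 + max x 0) * φr x * Real.exp (-(max t 0 * max x 0)) : ℝ) : ℂ) := by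
  have hexp : ∀ t x : ℝ, Real.exp (-(max t 0 * max x 0)) ≤ 1 := fun t x => by
    rw [Real.exp_le_one_iff]
    have : 0 ≤ max t 0 * max x 0 := by positivity
    linarith
  have hbd : ∀ t x : ℝ, ‖(((1 + max x 0) * φr x * Real.exp (-(max t 0 * max x 0)) : ℝ) : ℂ)‖ ≤ b := by
    intro t x
    rw [Complex.norm_real, Real.norm_eq_abs, abs_mul, abs_mul, abs_of_pos (one_add_max_pos x),
      abs_of_pos (Real.exp_pos _)]
    refine le_trans ?_ (hb x)
    have h1 : 0 ≤ max x 0 := le_max_right _ _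
    have h2 : (1 + max x 0) * |φr x| ≤ (1 + max x 0) ^ 2 * |φr x| := by
      gcongr; nlinarith
    refine le_trans ?_ h2
    exact mul_le_of_le_one_right (by positivity) (hexp t x)
  refine ⟨fun t => BoundedContinuousFunction.ofNormedAddCommGroup
    (fun x => (((1 + max x 0) * φr x * Real.exp (-(max t 0 * max x 0)) : ℝ) : ℂ))
    (by fun_prop) b (hbd t), ?_, fun t x => rfl⟩
  refine (LipschitzWith.of_dist_le_mul (K := ⟨b, hb0⟩) fun t s => ?_).continuous
  rw [BoundedContinuousFunction.dist_le (by positivity)]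
  intro x
  change dist (((1 + max x 0) * φr x * Real.exp (-(max t 0 * max x 0)) : ℝ) : ℂ)
    (((1 + max x 0) * φr x * Real.exp (-(max s 0 * max x 0)) : ℝ) : ℂ) ≤ b * dist t s
  have hlip : ∀ a c : ℝ, 0 ≤ a → 0 ≤ c → |Real.exp (-a) - Real.exp (-c)| ≤ |a - c| := by
    have : ∀ a c : ℝ, 0 ≤ a → a ≤ c → |Real.exp (-a) - Real.exp (-c)| ≤ |a - c| := by
      intro a c ha hac
      have h1 : Real.exp (-c) ≤ Real.exp (-a) := Real.exp_le_exp.2 (by linarith)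
      rw [abs_of_nonneg (by linarith), abs_of_nonpos (by linarith)]
      have h2 : Real.exp (-a) - Real.exp (-c) = Real.exp (-a) * (1 - Real.exp (-(c - a))) := by
        rw [mul_sub, ← Real.exp_add]; ring_nf
      rw [h2]
      have h3 := Real.add_one_le_exp (-(c - a))
      have h4 : Real.exp (-a) ≤ 1 := Real.exp_le_one_iff.2 (by linarith)
      have h5 : Real.exp (-(c - a)) ≤ 1 := Real.exp_le_one_iff.2 (by linarith)
      nlinarith [Real.exp_pos (-a)]
    intro a c ha hc
    rcases le_total a c with h | h
    · exact this a c ha h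
    · rw [abs_sub_comm, abs_sub_comm a]; exact this c a hc h
  rw [dist_eq_norm, ← Complex.ofReal_sub, Complex.norm_real, Real.norm_eq_abs, ← mul_sub, abs_mul, abs_mul,
    abs_of_pos (one_add_max_pos x), Real.dist_eq]
  have h1 : 0 ≤ max x 0 := le_max_right _ _
  have e1 := hlip (max t 0 * max x 0) (max s 0 * max x 0) (by positivity) (by positivity)
  rw [← sub_mul, abs_mul, abs_of_nonneg h1] at e1
  have e2 : |max t 0 - max s 0| ≤ |t - s| := abs_max_sub_max_le_abs t s 0
  calc (1 + max x 0) * |φr x| * |Real.exp (-(max t 0 * max x 0)) - Real.exp (-(max s 0 * max x 0))|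
      ≤ (1 + max x 0) * |φr x| * (|t - s| * (1 + max x 0)) := by
        gcongr
        refine e1.trans ?_
        gcongr
        linarith
    _ = ((1 + max x 0) ^ 2 * |φr x|) * |t - s| := by ring
    _ ≤ b * |t - s| := by gcongr; exact hb x

/-- The scalar truncated integral. -/
def psi (n : ℕ) (x : ℝ) : ℝ :=
  ∫ t in Set.Icc ((n : ℝ)⁻¹) (n : ℝ), (Real.sqrt t)⁻¹ * Real.exp (-(t * max x 0))

lemma psi_nonneg (n : ℕ) (x : ℝ) : 0 ≤ psi n x :=
  integral_nonneg fun t => by positivity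

lemma psi_bound (n : ℕ) (x : ℝ) : max x 0 * psi n x ^ 2 ≤ π := by
  rcases (le_max_right x 0).eq_or_lt with h | h
  · rw [← h]; simp; exact Real.pi_pos.le
  set y := max x 0 with hy
  rcases Nat.eq_zero_or_pos n with hn | hn
  · subst hn
    have : psi 0 x = 0 := by simp [psi]
    rw [this]; simp; exact Real.pi_pos.le
  have hn' : (0:ℝ) < n := by exact_mod_cast hn
  have hI := Real.integral_rpow_mul_exp_neg_mul_Ioi (a := 1/2) (r := y) (by norm_num) h
  rw [Real.Gamma_one_half_eq, ← Real.sqrt_eq_rpow] at hI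
  have hpos : 0 < √(1 / y) * √π := by
    have := Real.pi_pos
    positivity
  have hintg : IntegrableOn (fun t : ℝ => t ^ ((1:ℝ)/2 - 1) * Real.exp (-(y * t))) (Set.Ioi 0) := by
    by_contra hc
    rw [integral_undef hc] at hI
    linarith
  have hle : psi n x ≤ √(1 / y) * √π := by
    rw [← hI]
    have e : psi n x = ∫ t in Set.Icc ((n : ℝ)⁻¹) (n : ℝ), t ^ ((1:ℝ)/2 - 1) * Real.exp (-(y * t)) := by
      apply setIntegral_congr_fun measurableSet_Icc
      intro t ht
      have ht0 : 0 < t := lt_of_lt_of_le (by positivity) ht.1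
      simp only
      rw [Real.sqrt_eq_rpow, ← Real.rpow_neg ht0.le, mul_comm y t, ← hy,
        show ((1:ℝ)/2 - 1) = -(1/2) by norm_num]
    rw [e]
    apply setIntegral_mono_set hintg
    · filter_upwards [ae_restrict_mem measurableSet_Ioi] with t ht
      have : (0:ℝ) < t := ht
      simp only [Pi.zero_apply]
      positivity
    · apply Filter.Eventually.of_forall
      intro t ht
      exact lt_of_lt_of_le (by positivity) ht.1
  have h2 : psi n x ^ 2 ≤ (√(1 / y) * √π) ^ 2 := by
    gcongr; exact psi_nonneg n x
  rw [mul_pow, Real.sq_sqrt (by positivity), Real.sq_sqrt Real.pi_pos.le] at h2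
  calc y * psi n x ^ 2 ≤ y * (1 / y * π) := by gcongr
    _ = π := by field_simp

open scoped BoundedContinuousFunction in
/-- The functional calculus as a continuous linear map. -/
def Phi {d : ℕ} {G : Ed d → Fin d → Fin d → ℝ} (S : SpectralCalc d G) (f : L2 d) :
    (ℝ →ᵇ ℂ) →L[ℂ] L2 d :=
  LinearMap.mkContinuous
    { toFun := fun g => S.map g f
      map_add' := fun g1 g2 => by
        have := S.map_add g1 g2 ⟨g1.continuous, _, fun x _ => g1.norm_coe_le_norm x⟩
          ⟨g2.continuous, _, fun x _ => g2.norm_coe_le_norm x⟩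
        exact congrArg (fun T => T f) this
      map_smul' := fun c g => by
        have := S.map_smul c g ⟨g.continuous, _, fun x _ => g.norm_coe_le_norm x⟩
        exact congrArg (fun T => T f) this } ‖f‖
    (fun g => by
      rw [mul_comm]
      refine (ContinuousLinearMap.le_opNorm (S.map g) f).trans ?_
      gcongr
      exact S.map_norm _ _ fun x _ => g.norm_coe_le_norm x)

open scoped BoundedContinuousFunction in
lemma Phi_apply {d : ℕ} {G : Ed d → Fin d → Fin d → ℝ} (S : SpectralCalc d G) (f : L2 d)
    (g : ℝ →ᵇ ℂ) : Phi S f g = S.map g f := rfl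

set_option maxHeartbeats 1000000 in
lemma hn_exists {d : ℕ} {G : Ed d → Fin d → Fin d → ℝ} (S : SpectralCalc d G) (φr : ℝ → ℝ)
    (hφ1 : Continuous φr) (hφ2 : HasCompactSupport φr) :
    ∃ D : ℝ, 0 ≤ D ∧ ∀ f : L2 d, ∃ h : ℕ → L2 d,
      (∀ n, S.map kap (h n) = ∫ t in Set.Icc ((n : ℝ)⁻¹) (n : ℝ),
        ((Real.sqrt t)⁻¹ : ℝ) • (S.map (fun lam => Complex.exp (-(t : ℂ) * ((max lam 0 : ℝ) : ℂ)))
          (S.map (fun lam => ((φr lam : ℝ) : ℂ)) f))) ∧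
      (∀ n, ‖h n - S.map kap (h n)‖ ≤ D * ‖f‖) ∧
      (∀ n, (inner ℂ (S.map kap (h n)) (h n - S.map kap (h n))).re ≤ D * ‖f‖ ^ 2) := by
  have hcs : HasCompactSupport (fun x => (1 + max x 0) ^ 2 * φr x) :=
    hφ2.mul_left (f := fun x : ℝ => (1 + max x 0) ^ 2)
  have hcc : Continuous (fun x => (1 + max x 0) ^ 2 * φr x) := by fun_prop
  obtain ⟨b, hb⟩ := hcc.bounded_above_of_compact_support hcs
  have hb1 : ∀ x, (1 + max x 0) ^ 2 * |φr x| ≤ b := fun x => by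
    have := hb x
    rwa [Real.norm_eq_abs, abs_mul, abs_of_nonneg (by positivity)] at this
  have hb0 : 0 ≤ b := (norm_nonneg _).trans (hb 0)
  obtain ⟨σ, hσc, hσ⟩ := sig_exists φr hφ1 hb0 hb1
  have hφb : ∀ x, |φr x| ≤ b := fun x => by
    refine le_trans ?_ (hb1 x)
    apply le_mul_of_one_le_left (abs_nonneg _)
    have h1 : 0 ≤ max x 0 := le_max_right _ _
    nlinarith
  have hφg : GoodSymbol (fun lam => ((φr lam : ℝ) : ℂ)) :=
    ⟨by fun_prop, b, fun x _ => by rw [Complex.norm_real]; exact hφb x⟩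
  have hintg : ∀ n : ℕ, IntegrableOn (fun t : ℝ => ((Real.sqrt t)⁻¹ : ℝ) • σ t)
      (Set.Icc ((n : ℝ)⁻¹) (n : ℝ)) := by
    intro n
    rcases Nat.eq_zero_or_pos n with hn | hn
    · subst hn; simp
    have hn' : (0:ℝ) < n := by exact_mod_cast hn
    apply ContinuousOn.integrableOn_compact isCompact_Icc
    have hsq : ContinuousOn (fun t : ℝ => (Real.sqrt t)⁻¹) (Set.Icc ((n : ℝ)⁻¹) (n : ℝ)) := by
      apply ContinuousOn.inv₀ (by fun_prop)
      intro t ht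
      have ht0 : 0 < t := lt_of_lt_of_le (by positivity) ht.1
      exact (Real.sqrt_pos.2 ht0).ne'
    exact ContinuousOn.smul hsq hσc.continuousOn
  set Q := fun n : ℕ => ∫ t in Set.Icc ((n : ℝ)⁻¹) (n : ℝ), ((Real.sqrt t)⁻¹ : ℝ) • σ t with hQ
  have hnn : ∀ (n : ℕ) (t : ℝ), t ∈ Set.Icc ((n : ℝ)⁻¹) (n : ℝ) → 0 ≤ t := fun n t ht =>
    le_trans (by positivity) ht.1
  have hQx : ∀ n x, Q n x = (((1 + max x 0) * φr x * psi n x : ℝ) : ℂ) := by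
    intro n x
    have e := ContinuousLinearMap.integral_comp_comm (BoundedContinuousFunction.evalCLM ℂ x) (hintg n)
    have e' : Q n x = ∫ t in Set.Icc ((n : ℝ)⁻¹) (n : ℝ), (((Real.sqrt t)⁻¹ : ℝ) • σ t) x := e.symm
    rw [e', psi, ← integral_const_mul, ← integral_complex_ofReal]
    apply setIntegral_congr_fun measurableSet_Icc
    intro t ht
    have := hnn n t ht
    simp only [BoundedContinuousFunction.coe_smul, hσ, max_eq_left this]
    rw [Complex.real_smul, ← Complex.ofReal_mul]
    congr 1
    ring
  have hQg : ∀ n, GoodSymbol (Q n) := fun n => ⟨(Q n).continuous, _, fun x _ => (Q n).norm_coe_le_norm x⟩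
  have hg1 : ∀ n, GoodSymbol (fun x => ((max x 0 * φr x * psi n x : ℝ) : ℂ)) := by
    intro n
    have h1 : (fun x => ((max x 0 * φr x * psi n x : ℝ) : ℂ)) =
        fun x => Q n x + (-1) * (kap x * Q n x) := by
      ext x
      have := (one_add_max_pos x).ne'
      rw [hQx, kap, ← Complex.ofReal_mul]
      have e2 : (1 + max x 0)⁻¹ * ((1 + max x 0) * φr x * psi n x) = φr x * psi n x := by
        field_simp
      rw [e2]; push_cast; ring
    rw [h1]
    exact (hQg n).add ((kap_good.mul (hQg n)).cmul (-1))
  have hKQ : ∀ n f, S.map kap (Phi S f (Q n)) = S.map (fun x => ((φr x * psi n x : ℝ) : ℂ)) f := by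
    intro n f
    rw [Phi_apply, ← ContinuousLinearMap.comp_apply, ← S.map_mul _ _ kap_good (hQg n)]
    congr 2
    ext x
    have := (one_add_max_pos x).ne'
    rw [hQx, kap, ← Complex.ofReal_mul]
    congr 1
    field_simp
  have hg2 : ∀ n, GoodSymbol (fun x => ((φr x * psi n x : ℝ) : ℂ)) := by
    intro n
    have h1 : (fun x => ((φr x * psi n x : ℝ) : ℂ)) = fun x => kap x * Q n x := by
      ext x
      have := (one_add_max_pos x).ne'
      rw [hQx, kap, ← Complex.ofReal_mul]
      congr 1
      field_simp
    rw [h1]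
    exact (kap_good.mul (hQg n))
  have hdiff : ∀ n f, Phi S f (Q n) - S.map kap (Phi S f (Q n)) =
      S.map (fun x => ((max x 0 * φr x * psi n x : ℝ) : ℂ)) f := by
    intro n f
    rw [sub_eq_iff_eq_add, hKQ, ← add_apply, ← S.map_add _ _ (hg1 n) (hg2 n), Phi_apply]
    congr 2
    ext x
    rw [hQx, ← Complex.ofReal_add]
    congr 1
    ring
  set D := 4 * b + π * b ^ 2 with hD
  have hpi := Real.pi_pos
  refine ⟨D, by positivity, fun f => ⟨fun n => Phi S f (Q n), ?_, ?_, ?_⟩⟩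
  · intro n
    have e := ContinuousLinearMap.integral_comp_comm ((S.map kap).comp (Phi S f)) (hintg n)
    rw [ContinuousLinearMap.comp_apply] at e
    rw [hQ, ← e]
    apply setIntegral_congr_fun measurableSet_Icc
    intro t ht
    have ht0 := hnn n t ht
    have hs : ∀ (r : ℝ) (g : L2 d), r • g = (r : ℂ) • g := fun r g => (Complex.coe_smul r g).symm
    have e1 : S.map kap (Phi S f (σ t)) = S.map (fun lam => Complex.exp (-(t : ℂ) * ((max lam 0 : ℝ) : ℂ)))
          (S.map (fun lam => ((φr lam : ℝ) : ℂ)) f) := by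
      have hge : GoodSymbol (fun lam => Complex.exp (-(t : ℂ) * ((max lam 0 : ℝ) : ℂ))) := by
        refine ⟨by fun_prop, 1, fun x _ => ?_⟩
        rw [Complex.norm_exp, Real.exp_le_one_iff]
        simp
        positivity
      rw [Phi_apply, ← ContinuousLinearMap.comp_apply, ← S.map_mul _ _ kap_good
        ⟨(σ t).continuous, _, fun x _ => (σ t).norm_coe_le_norm x⟩, ← ContinuousLinearMap.comp_apply,
        ← S.map_mul _ _ hge hφg]
      congr 2
      ext x
      have := (one_add_max_pos x).ne'
      have e2 : Complex.exp (-(t : ℂ) * ((max x 0 : ℝ) : ℂ)) = ((Real.exp (-(t * max x 0)) : ℝ) : ℂ) := by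
        push_cast; ring_nf
      rw [hσ, kap, e2, ← Complex.ofReal_mul, ← Complex.ofReal_mul, max_eq_left ht0]
      congr 1
      field_simp
    simp only [ContinuousLinearMap.comp_apply]
    rw [← e1]
    have : ((Real.sqrt t)⁻¹ : ℝ) • σ t = (((Real.sqrt t)⁻¹ : ℝ) : ℂ) • σ t := (Complex.coe_smul _ _).symm
    rw [this, map_smul, map_smul, hs]
  · intro n
    rw [hdiff]
    refine (ContinuousLinearMap.le_opNorm _ _).trans ?_
    gcongr
    apply S.map_norm
    intro x hx
    have h1 := psi_bound n x
    rw [max_eq_left hx] at h1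
    rw [Complex.norm_real, Real.norm_eq_abs, max_eq_left hx, abs_mul, abs_mul, abs_of_nonneg hx,
      abs_of_nonneg (psi_nonneg n x)]
    have h2 : x * psi n x ≤ 4 * (1 + x) ^ 2 := by
      nlinarith [sq_nonneg (psi n x - 1), Real.pi_le_four, mul_nonneg hx (sq_nonneg (psi n x - 1))]
    have h3 := hb1 x
    rw [max_eq_left hx] at h3
    have h4 : (x * psi n x) * |φr x| ≤ (4 * (1 + x) ^ 2) * |φr x| := by gcongr
    have h5 : 0 ≤ π * b ^ 2 := by positivity
    linarith
  · intro n
    rw [hdiff, hKQ, ← ContinuousLinearMap.adjoint_inner_right, S.map_star _ (hg2 n),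
      ← ContinuousLinearMap.comp_apply]
    have hst : GoodSymbol (fun x => (starRingEnd ℂ) ((φr x * psi n x : ℝ) : ℂ)) := by
      simpa only [Complex.conj_ofReal] using hg2 n
    rw [← S.map_mul _ _ hst (hg1 n)]
    refine (Complex.re_le_norm _).trans ((norm_inner_le_norm _ _).trans ?_)
    rw [sq, ← mul_assoc, mul_comm]
    gcongr
    refine (ContinuousLinearMap.le_opNorm _ _).trans ?_
    gcongr
    apply S.map_norm
    intro x hx
    have h1 := psi_bound n x
    rw [Complex.conj_ofReal, ← Complex.ofReal_mul, Complex.norm_real, Real.norm_eq_abs]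
    have : φr x * psi n x * (max x 0 * φr x * psi n x) = (max x 0 * psi n x ^ 2) * |φr x| ^ 2 := by
      rw [sq_abs]; ring
    rw [this, abs_of_nonneg (by positivity)]
    have h2 : max x 0 * psi n x ^ 2 * |φr x| ^ 2 ≤ π * b ^ 2 := by
      gcongr; exact hφb x
    linarith

lemma mulOp_exists {d : ℕ} (χ : Ed d → ℂ) (hc : Continuous χ) (hs : HasCompactSupport χ) :
    ∃ X : L2 d →L[ℂ] L2 d, ∀ f : L2 d, X f =ᵐ[volume] fun x => χ x * f x := by
  have hm : MemLp χ ∞ (volume : Measure (Ed d)) := hc.memLp_of_hasCompactSupport hs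
  refine ⟨(ContinuousLinearMap.mul ℂ ℂ).holderL volume ∞ 2 2 hm.toLp, fun f => ?_⟩
  filter_upwards [ContinuousLinearMap.coeFn_holder (r := 2) (ContinuousLinearMap.mul ℂ ℂ) hm.toLp f,
    hm.coeFn_toLp] with x h1 h2
  refine h1.trans ?_
  rw [h2]
  rfl

lemma exp_lip (a b : ℝ) : ‖Complex.exp (a * I) - Complex.exp (b * I)‖ ≤ |a - b| := by
  have e : Complex.exp (a * I) - Complex.exp (b * I)
      = Complex.exp (b * I) * (Complex.exp (I * ((a - b : ℝ) : ℂ)) - 1) := by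
    rw [mul_sub, ← Complex.exp_add, mul_one]; congr 2; push_cast; ring
  rw [e, norm_mul, Complex.norm_exp_ofReal_mul_I, one_mul]
  exact Real.norm_exp_I_mul_ofReal_sub_one_le

lemma kern_exists {d : ℕ} (m : Ed d → ℝ) (hmc : Continuous m) (hms : HasCompactSupport m) {r : ℝ}
    (hr0 : 0 ≤ r) (hr : ∀ ξ, r < ‖ξ‖ → m ξ = 0) :
    ∃ k : Ed d → L2 d, Continuous k ∧
      ∀ x, k x =ᵐ[volume] fun ξ => Complex.exp ((-(2 * π * inner ℝ ξ x) : ℝ) * I) * (m ξ : ℂ) := by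
  have hM : ∀ x : Ed d, MemLp (fun ξ : Ed d => Complex.exp ((-(2 * π * inner ℝ ξ x) : ℝ) * I) * (m ξ : ℂ))
      2 volume := by
    intro x
    apply Continuous.memLp_of_hasCompactSupport
    · fun_prop
    · have : HasCompactSupport (fun ξ => (m ξ : ℂ)) := hms.comp_left (g := fun y : ℝ => (y : ℂ)) (by simp)
      exact this.mul_left (f := fun ξ : Ed d => Complex.exp ((-(2 * π * inner ℝ ξ x) : ℝ) * I))
  have hM0 : MemLp (fun ξ : Ed d => (m ξ : ℂ)) 2 volume := by
    apply Continuous.memLp_of_hasCompactSupport (by fun_prop)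
    exact hms.comp_left (g := fun y : ℝ => (y : ℂ)) (by simp)
  refine ⟨fun x => (hM x).toLp, ?_, fun x => (hM x).coeFn_toLp⟩
  have hpi := Real.pi_pos
  refine (LipschitzWith.of_dist_le_mul (K := ⟨2 * π * r * ‖hM0.toLp‖, by positivity⟩) fun x y => ?_).continuous
  change _ ≤ 2 * π * r * ‖hM0.toLp‖ * dist x y
  rw [dist_eq_norm]
  have : 2 * π * r * ‖hM0.toLp‖ * dist x y = (2 * π * r * dist x y) * ‖hM0.toLp‖ := by ring
  rw [this]
  apply Lp.norm_le_mul_norm_of_ae_le_mul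
  filter_upwards [Lp.coeFn_sub (hM x).toLp (hM y).toLp, (hM x).coeFn_toLp, (hM y).coeFn_toLp,
    hM0.coeFn_toLp] with ξ h1 h2 h3 h4
  rw [h1, Pi.sub_apply, h2, h3, h4, ← sub_mul, norm_mul]
  rcases lt_or_ge r ‖ξ‖ with h | h
  · simp [hr ξ h]
  gcongr
  refine (exp_lip _ _).trans ?_
  have e : -(2 * π * inner ℝ ξ x) - -(2 * π * inner ℝ ξ y) = -(2 * π * inner ℝ ξ (x - y)) := by
    rw [inner_sub_right]; ring
  rw [e, abs_neg, abs_mul, abs_of_pos (by positivity : 0 < 2 * π), mul_assoc (2 * π), dist_eq_norm]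
  gcongr
  refine (abs_real_inner_le_norm _ _).trans ?_
  gcongr

lemma sum_bound {d : ℕ} (w : Sc d) (v : Fin d → Sc d) {c : ℝ} (hc : 0 ≤ c)
    (h : ∀ x, ‖w x‖ ≤ c * ∑ l, ‖v l x‖) : ‖toL w‖ ≤ c * ∑ l, ‖toL (v l)‖ := by
  have hn : ∀ l, MemLp (fun x => ‖v l x‖) 2 (volume : Measure (Ed d)) := fun l => ((v l).memLp 2 volume).norm
  obtain ⟨N, hN⟩ : ∃ N : Fin d → Lp ℝ 2 (volume : Measure (Ed d)), ∀ l, N l =ᵐ[volume] fun x => ‖v l x‖ :=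
    ⟨fun l => (hn l).toLp (fun x => ‖v l x‖), fun l => (hn l).coeFn_toLp⟩
  have e1 : ∀ l, ‖N l‖ = ‖toL (v l)‖ := by
    intro l
    apply le_antisymm
    · apply Lp.norm_le_norm_of_ae_le
      filter_upwards [hN l, toL_ae (v l)] with x h1 h2
      rw [h1, h2]; simp
    · apply Lp.norm_le_norm_of_ae_le
      filter_upwards [hN l, toL_ae (v l)] with x h1 h2
      rw [h1, h2]; simp
  have h1 : ‖toL w‖ ≤ c * ‖∑ l, N l‖ := by
    apply Lp.norm_le_mul_norm_of_ae_le_mul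
    have hae : ∀ᵐ x : Ed d, ∀ l, N l x = ‖v l x‖ := ae_all_iff.2 hN
    filter_upwards [toL_ae w, hae, Lp.coeFn_finsetSum Finset.univ N] with x h2 h3 h4
    rw [h2, h4]
    simp only [Finset.sum_apply, h3]
    refine (h x).trans ?_
    exact mul_le_mul_of_nonneg_left (le_abs_self _) hc
  refine h1.trans (mul_le_mul_of_nonneg_left ?_ hc)
  refine (norm_sum_le _ _).trans (le_of_eq ?_)
  simp only [e1]

lemma HS_exists {d : ℕ} (χ : Ed d → ℂ) (hc : Continuous χ) (hs : HasCompactSupport χ)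
    (k : Ed d → L2 d) (hk : Continuous k) :
    ∃ A : L2 d →L[ℂ] L2 d, IsCompactOperator A ∧
      ∀ g : L2 d, A g =ᵐ[volume] fun x => χ x * inner ℂ (k x) g := by
  let F0 : Ed d → (L2 d →L[ℂ] ℂ) := fun x => χ x • innerSL ℂ (k x)
  have hF0 : Continuous F0 := hc.smul ((innerSL ℂ).continuous.comp hk)
  have hF1 : HasCompactSupport F0 := HasCompactSupport.intro hs (K := tsupport χ) fun x hx => by
    have h0 : χ x = 0 := image_eq_zero_of_notMem_tsupport hx
    change χ x • innerSL ℂ (k x) = 0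
    rw [h0]
    exact zero_smul ℂ (innerSL ℂ (k x))
  have hF : MemLp F0 2 (volume : Measure (Ed d)) := hF0.memLp_of_hasCompactSupport hF1
  refine ⟨HSop (hF.toLp F0), HSop_compact _, fun g => ?_⟩
  filter_upwards [HSop_apply (hF.toLp F0) g, hF.coeFn_toLp] with x h1 h2
  rw [h1, h2]
  rfl

set_option maxHeartbeats 1000000 in
lemma cutoff {d : ℕ} (χ : Ed d → ℂ) (hc : Continuous χ) (hs : HasCompactSupport χ)
    (X : L2 d →L[ℂ] L2 d) (hX : ∀ f : L2 d, X f =ᵐ[volume] fun x => χ x * f x) {R : ℝ} (hR : 0 < R) :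
    ∃ A : L2 d →L[ℂ] L2 d, IsCompactOperator A ∧
      ∀ v : Sc d, ‖X (toL v) - A (toL v)‖ ≤ ‖X‖ * (R⁻¹ * ∑ l, ‖toL (dd l v)‖) := by
  have hpi := Real.pi_pos
  let mb : ContDiffBump (0 : Ed d) := ⟨R, 2 * R, hR, by linarith⟩
  set m : Ed d → ℝ := fun ξ => mb ξ with hm
  have hmc : Continuous m := mb.continuous
  have hms : HasCompactSupport m := mb.hasCompactSupport
  have hmtg : m.HasTemperateGrowth := by
    have hsm : ContDiff ℝ (⊤ : ℕ∞) m := mb.contDiff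
    exact (hms.toSchwartzMap hsm).hasTemperateGrowth
  obtain ⟨k, hkc, hk⟩ := kern_exists m hmc hms (r := 2 * R) (by positivity)
    (fun ξ h => mb.zero_of_le_dist (by rw [dist_zero_right]; exact h.le))
  obtain ⟨A0, hA0c, hA0⟩ := HS_exists χ hc hs k hkc
  let FF : L2 d →L[ℂ] L2 d := (Lp.fourierTransformₗᵢ (Ed d) ℂ).toContinuousLinearEquiv
  refine ⟨A0.comp FF, hA0c.comp_clm FF, fun v => ?_⟩
  set vm : Sc d := 𝓕⁻ (mulS m (𝓕 v)) with hvm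
  have hFv : FF (toL v) = toL (𝓕 v) := SchwartzMap.toLp_fourier_eq v
  have hA : (A0.comp FF) (toL v) = X (toL vm) := by
    rw [ContinuousLinearMap.comp_apply, hFv]
    apply Lp.ext
    filter_upwards [hA0 (toL (𝓕 v)), hX (toL vm), toL_ae vm] with x h1 h3 h4
    rw [h1, h3, h4]
    congr 1
    rw [hvm, SchwartzMap.fourierInv_coe, Real.fourierInv_eq', L2.inner_def]
    apply integral_congr_ae
    filter_upwards [hk x, toL_ae (𝓕 v)] with ξ h5 h6
    rw [h5, h6, RCLike.inner_apply, mulS_apply hmtg, map_mul, ← Complex.exp_conj]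
    simp only [map_mul, Complex.conj_ofReal, Complex.conj_I, smul_eq_mul]
    rw [show ((-(2 * π * inner ℝ ξ x) : ℝ) : ℂ) * -I = ((2 * π * inner ℝ ξ x : ℝ) : ℂ) * I by push_cast; ring]
    ring
  rw [hA, ← map_sub, ← map_sub]
  refine (ContinuousLinearMap.le_opNorm _ _).trans ?_
  gcongr
  have hP : ∀ u : Sc d, ‖toL (𝓕 u)‖ = ‖toL u‖ := fun u => SchwartzMap.norm_fourier_toL2_eq u
  simp only [← hP (dd _ v), ← hP (v - vm)]
  apply sum_bound _ _ (by positivity)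
  intro ξ
  have e1 : 𝓕 (v - vm) ξ = ((1 - m ξ : ℝ) : ℂ) * 𝓕 v ξ := by
    rw [sub_eq_add_neg, FourierTransform.fourier_add, FourierTransform.fourier_neg, hvm,
      FourierTransform.fourier_fourierInv_eq, add_apply, neg_apply, mulS_apply hmtg]
    push_cast; ring
  simp only [fourier_dd, e1, norm_mul]
  rw [← Finset.sum_mul, ← mul_assoc]
  gcongr
  rw [Complex.norm_real, Real.norm_of_nonneg (sub_nonneg.2 mb.le_one)]
  have e2 : ‖ξ‖ ≤ ∑ l, ‖(2 * π * I : ℂ)‖ * ‖(ξ l : ℂ)‖ := by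
    have h1 : ‖ξ‖ ≤ ∑ l, ‖ξ l‖ := by
      rw [EuclideanSpace.norm_eq]
      apply Real.sqrt_le_iff.2 ⟨by positivity, ?_⟩
      exact Finset.sum_sq_le_sq_sum_of_nonneg (fun i _ => norm_nonneg _)
    refine h1.trans (Finset.sum_le_sum fun l _ => ?_)
    rw [Complex.norm_real]
    apply le_mul_of_one_le_left (norm_nonneg _)
    simp [abs_of_pos hpi]
    linarith [Real.pi_gt_three]
  rcases le_or_gt ‖ξ‖ R with h | h
  · have : mb ξ = 1 := mb.one_of_mem_closedBall (by simpa using h)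
    rw [this]; simp only [sub_self]; positivity
  · have h1 : 1 - mb ξ ≤ 1 := by linarith [mb.nonneg' ξ]
    refine h1.trans ?_
    rw [inv_mul_eq_div, le_div_iff₀ hR]
    simp only [norm_mul] at e2 ⊢
    linarith

lemma cutoffB {d : ℕ} {G : Ed d → Fin d → Fin d → ℝ} (j : Fin d)
    (B : Fin d → L2 d →L[ℂ] L2 d) (C : Fin d → Fin d → L2 d →L[ℂ] L2 d)
    (hB : ∀ j u, B j (LL G u) = toL (dd j u)) (hC : ∀ l j u, C l j (LL G u) = toL (dd l (dd j u)))
    (hd : DenseRange (LL G)) (X A : L2 d →L[ℂ] L2 d) {R : ℝ}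
    (hA : ∀ v : Sc d, ‖X (toL v) - A (toL v)‖ ≤ ‖X‖ * (R⁻¹ * ∑ l, ‖toL (dd l v)‖)) (h : L2 d) :
    ‖X (B j h) - A (B j h)‖ ≤ ‖X‖ * (R⁻¹ * ∑ l, ‖C l j h‖) := by
  refine hd.induction_on (p := fun h => ‖X (B j h) - A (B j h)‖ ≤ ‖X‖ * (R⁻¹ * ∑ l, ‖C l j h‖)) h
    (isClosed_le (by fun_prop) (by fun_prop)) fun u => ?_
  simp only [hB, hC]
  exact hA (dd j u)

lemma final_est {d : ℕ} {G : Ed d → Fin d → Fin d → ℝ}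
    (hG : Standing d G) (S : SpectralCalc d G)
    (φr : ℝ → ℝ) (hφ1 : Continuous φr) (hφ2 : HasCompactSupport φr)
    (j : Fin d) (Rj : L2 d →L[ℂ] L2 d) (hRj : RieszOf d G S j Rj) (X : L2 d →L[ℂ] L2 d) :
    ∃ K : ℝ, 0 ≤ K ∧ ∀ (A : L2 d →L[ℂ] L2 d) (R : ℝ), 0 < R →
      (∀ v : Sc d, ‖X (toL v) - A (toL v)‖ ≤ ‖X‖ * (R⁻¹ * ∑ l, ‖toL (dd l v)‖)) →
      ∀ f, ‖X (Rj (S.map (fun lam => ((φr lam : ℝ) : ℂ)) f)) -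
        A (Rj (S.map (fun lam => ((φr lam : ℝ) : ℂ)) f))‖ ≤ R⁻¹ * K * ‖f‖ := by
  obtain ⟨B, C, c, hc, hB, hC, hd, hw, hBn, hCn⟩ := ops hG S
  obtain ⟨D, hD, hh⟩ := hn_exists S φr hφ1 hφ2
  have hE : 0 ≤ c * (D + d * √(c * D)) := by positivity
  have hK : 0 ≤ (√π)⁻¹ * (‖X‖ * (d * (c * (D + d * √(c * D))))) := by positivity
  refine ⟨(√π)⁻¹ * (‖X‖ * (d * (c * (D + d * √(c * D))))), hK, fun A R hR hA f => ?_⟩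
  obtain ⟨h, h1, h2, h3⟩ := hh f
  have hlim := hRj (S.map (fun lam => ((φr lam : ℝ) : ℂ)) f) (fun n => S.map kap (h n))
    (fun n => B j (h n)) h1 (fun n u => hw j (h n) u)
  have hBb : ∀ k n, ‖B k (h n)‖ ≤ √(c * D) * ‖f‖ := by
    intro k n
    apply le_of_sq_le_sq _ (by positivity)
    rw [mul_pow, Real.sq_sqrt (by positivity), mul_assoc]
    exact (hBn k (h n)).trans (mul_le_mul_of_nonneg_left (h3 n) hc)
  have hCb : ∀ l n, ‖C l j (h n)‖ ≤ c * (D + d * √(c * D)) * ‖f‖ := by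
    intro l n
    refine (hCn l j (h n)).trans ?_
    rw [mul_assoc]
    apply mul_le_mul_of_nonneg_left _ hc
    rw [add_mul]
    refine add_le_add (h2 n) ?_
    refine (Finset.sum_le_sum fun k _ => hBb k n).trans (le_of_eq ?_)
    simp [mul_assoc]
  have hcl : Tendsto (fun n : ℕ => ‖X (((√π)⁻¹ : ℝ) • B j (h n)) - A (((√π)⁻¹ : ℝ) • B j (h n))‖) atTop
      (𝓝 ‖X (Rj (S.map (fun lam => ((φr lam : ℝ) : ℂ)) f)) -
        A (Rj (S.map (fun lam => ((φr lam : ℝ) : ℂ)) f))‖) :=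
    (((X.continuous.tendsto _).comp hlim).sub ((A.continuous.tendsto _).comp hlim)).norm
  refine le_of_tendsto hcl (Eventually.of_forall fun n => ?_)
  have e : ‖X (((√π)⁻¹ : ℝ) • B j (h n)) - A (((√π)⁻¹ : ℝ) • B j (h n))‖
      = (√π)⁻¹ * ‖X (B j (h n)) - A (B j (h n))‖ := by
    rw [X.map_smul_of_tower, A.map_smul_of_tower, ← smul_sub, norm_smul,
      Real.norm_of_nonneg (by positivity)]
  rw [e]
  have s1 : ∑ l, ‖C l j (h n)‖ ≤ d * (c * (D + d * √(c * D)) * ‖f‖) := by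
    refine (Finset.sum_le_sum fun k _ => hCb k n).trans (le_of_eq ?_)
    simp
  have s2 := cutoffB j B C hB hC hd X A hA (h n)
  have s3 : ‖X‖ * (R⁻¹ * ∑ l, ‖C l j (h n)‖) ≤ ‖X‖ * (R⁻¹ * (d * (c * (D + d * √(c * D)) * ‖f‖))) :=
    mul_le_mul_of_nonneg_left (mul_le_mul_of_nonneg_left s1 (by positivity)) (norm_nonneg _)
  refine (mul_le_mul_of_nonneg_left (s2.trans s3) (by positivity)).trans (le_of_eq ?_)
  ring

/-- **Proposition (local compactness of the Riesz transform).** Let `d ≥ 3` and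
`P = -div(G∇)` with `G` symmetric, `C_b^∞`, uniformly elliptic.  For every
`χ ∈ C₀^∞(ℝ^d)`, `φ ∈ C₀^∞(ℝ)` and `j`, the operator `χ(x) R(j) φ(P)` is compact on
`L²(ℝ^d)`, where `R(j) = ∂_j P^{-1/2}` is the `j`-th Riesz transform (the strong
limit of `π^{-1/2} ∂_j ∫_{1/n}^n e^{-tP} dt/√t`). -/
theorem statement14 (d : ℕ) (hd : 3 ≤ d) (G : Ed d → Fin d → Fin d → ℝ)
    (hG : Standing d G) (S : SpectralCalc d G)
    (χ : Ed d → ℂ) (hχ1 : ContDiff ℝ (⊤ : ℕ∞) χ) (hχ2 : HasCompactSupport χ)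
    (φr : ℝ → ℝ) (hφ1 : ContDiff ℝ (⊤ : ℕ∞) φr) (hφ2 : HasCompactSupport φr)
    (j : Fin d) (Rj : L2 d →L[ℂ] L2 d) (hRj : RieszOf d G S j Rj)
    (T : L2 d → L2 d)
    (hT : ∀ f : L2 d,
      (⇑(T f)) =ᵐ[volume] fun x => χ x * (Rj ((S.map fun lam => ((φr lam : ℝ) : ℂ)) f)) x) :
    IsCompactOperator T := by
  obtain ⟨X, hX⟩ := mulOp_exists χ hχ1.continuous hχ2
  obtain ⟨K, hK, hest⟩ := final_est hG S φr hφ1.continuous hφ2 j Rj hRj X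
  choose A hAc hA using fun n : ℕ => cutoff χ hχ1.continuous hχ2 X hX (R := (n : ℝ) + 1) (by positivity)
  let Q : L2 d →L[ℂ] L2 d := Rj.comp (S.map fun lam => ((φr lam : ℝ) : ℂ))
  have hTX : T = ⇑(X.comp Q) := by
    funext f
    apply Lp.ext
    exact (hT f).trans (hX _).symm
  rw [hTX]
  have hlim : Tendsto (fun n : ℕ => (A n).comp Q) atTop (𝓝 (X.comp Q)) := by
    rw [tendsto_iff_norm_sub_tendsto_zero]
    have hz : Tendsto (fun n : ℕ => ((n : ℝ) + 1)⁻¹ * K) atTop (𝓝 0) := by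
      have := (tendsto_one_div_add_atTop_nhds_zero_nat (𝕜 := ℝ)).mul_const K
      simpa using this
    refine squeeze_zero (fun n => norm_nonneg _) (fun n => ?_) hz
    rw [norm_sub_rev]
    refine ContinuousLinearMap.opNorm_le_bound _ (by positivity) fun f => ?_
    exact hest (A n) ((n : ℝ) + 1) (by positivity) (hA n) f
  exact isCompactOperator_of_tendsto hlim (Eventually.of_forall fun n => (hAc n).comp_clm Q)


end
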